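/- arXiv:2004.03778 — 3 statements merged into one kernel-verified Lean document; each statement's English description precedes it below -/
import Mathlib

section
/- Let n ≥ 3 and let R be a multiset of n−1 pairwise distinct nonzero complex numbers. Let S be the set of injective tuples λ = (λ₁,…,λₙ) ∈ ℂⁿ with λ₁+⋯+λₙ = 0 and λ₁⋯λₙ = 1 such that Q_λ(t) = ∏_{j=1}^{n}(t−λ_j) has n−1 pairwise distinct critical points and its multiset of critical values equals R. Then S is finite and the number of equivalence classes of S under the relation λ ∼ λ′ iff there exist ω ∈ ℂ with ωⁿ = 1 and a permutation π with λ′_i = ω·λ_{π(i)} is at most n^{n−3}. (Equivalently: for type II commode quasi-homogeneous functions, each non-degenerate value of the Henry–Parusiński invariant is realized by at most n^{n−3} distinct analytic equivalence classes.) -/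
open MvPolynomial in
lemma aux_hasStrictFDerivAt {m : ℕ} (p : MvPolynomial (Fin m) ℂ) (z : Fin m → ℂ) :
    HasStrictFDerivAt (fun x => eval x p)
      (∑ j, (eval z (pderiv j p)) • (ContinuousLinearMap.proj j : (Fin m → ℂ) →L[ℂ] ℂ)) z := by
  induction p using MvPolynomial.induction_on with
  | C a =>
    have h : HasStrictFDerivAt (fun _ : Fin m → ℂ => a) (0 : (Fin m → ℂ) →L[ℂ] ℂ) z :=
      hasStrictFDerivAt_const a z
    simp only [eval_C]
    refine h.congr_fderiv ?_
    ext v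
    simp
  | add p q hp hq =>
    refine ((hp.add hq).congr_fderiv ?_).congr_of_eventuallyEq ?_
    · ext v
      simp [add_mul, Finset.sum_add_distrib]
    · exact Filter.Eventually.of_forall fun x => by simp
  | mul_X p i hp =>
    have h := hp.mul ((ContinuousLinearMap.proj i : (Fin m → ℂ) →L[ℂ] ℂ).hasStrictFDerivAt (x := z))
    simp only [map_mul, eval_X]
    refine h.congr_fderiv ?_
    ext v
    simp [Derivation.leibniz, pderiv_X, Pi.single_apply, add_mul, Finset.sum_add_distrib,
      Finset.mul_sum, apply_ite (eval z), ite_mul, Finset.sum_ite_eq]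
    ring_nf

lemma aux_sum_multichoose (m N : ℕ) :
    ∑ k ∈ Finset.range (N + 1), m.multichoose k = (N + m).choose m := by
  have : ∑ k ∈ Finset.range (N + 1), m.multichoose k = (m+1).multichoose N := by
    induction N with
    | zero => simp
    | succ N ih => rw [Finset.sum_range_succ, ih, Nat.multichoose_succ_succ, add_comm]
  rw [this, Nat.multichoose_eq, show m + 1 + N - 1 = N + m by omega,
    Nat.choose_symm_add]

lemma aux_finrank (m N : ℕ) :
    Module.finrank ℂ (MvPolynomial.restrictTotalDegree (Fin m) ℂ N) = (N + m).choose m := by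
  rw [← aux_sum_multichoose]
  unfold MvPolynomial.restrictTotalDegree
  rw [Module.finrank_eq_nat_card_basis (MvPolynomial.basisRestrictSupport ℂ _)]
  have : ({n : Fin m →₀ ℕ | (n.sum fun _ e => e) ≤ N}) =
      (((Finset.range (N+1)).biUnion fun k => Finset.finsuppAntidiag Finset.univ k : 
        Finset (Fin m →₀ ℕ)) : Set (Fin m →₀ ℕ)) := by
    ext s
    simp [Finsupp.sum_fintype]
  rw [this]
  rw [Nat.card_coe_set_eq, Set.ncard_coe_finset, Finset.card_biUnion]
  · simp [Finset.card_finsuppAntidiag_nat_eq_multichoose]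
  · intro a _ b _ hab
    rw [Function.onFun, Finset.disjoint_left]
    intro s hs hs'
    simp at hs hs'
    omega

lemma aux_limit (K m d c : ℕ)
    (h : ∀ T : ℕ, K * (T + m).choose m ≤ (d * T + c + m).choose m) : K ≤ d ^ m := by
  have h1 : ∀ T : ℕ, K * (T + 1) ^ m ≤ (d * T + c + m) ^ m := by
    intro T
    have a1 : (T+1)^m ≤ m.factorial * (T+m).choose m := by
      have := Nat.pow_succ_le_ascFactorial (T+1) m
      rwa [Nat.ascFactorial_eq_factorial_mul_choose] at this
    have a2 : m.factorial * (d * T + c + m).choose m ≤ (d * T + c + m)^m := by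
      rw [← Nat.descFactorial_eq_factorial_mul_choose]
      exact Nat.descFactorial_le_pow _ _
    calc _ ≤ K * (m.factorial * (T+m).choose m) := Nat.mul_le_mul_left _ a1
      _ = m.factorial * (K * (T+m).choose m) := by ring
      _ ≤ _ := (Nat.mul_le_mul_left _ (h T)).trans a2
  have h2 : Filter.Tendsto (fun T : ℕ => ((d : ℝ) + ((c : ℝ) + m - d) * (1 / ((T : ℝ) + 1))) ^ m)
      Filter.atTop (nhds (((d : ℝ) + ((c : ℝ) + m - d) * 0) ^ m)) := by
    refine Filter.Tendsto.pow ?_ _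
    refine tendsto_const_nhds.add (tendsto_const_nhds.mul ?_)
    exact tendsto_one_div_add_atTop_nhds_zero_nat
  have h3 : (K : ℝ) ≤ ((d : ℝ) + ((c : ℝ) + m - d) * 0) ^ m := by
    refine ge_of_tendsto' h2 fun T => ?_
    have hT : (0:ℝ) < (T:ℝ) + 1 := by positivity
    have : ((d : ℝ) + ((c : ℝ) + m - d) * (1 / ((T : ℝ) + 1))) = (d * T + c + m) / (T + 1) := by
      field_simp; ring
    rw [this, div_pow, le_div_iff₀ (by positivity)]
    exact_mod_cast h1 T
  simp at h3
  exact_mod_cast h3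

open MvPolynomial in
lemma aux_totalDegree_bind {m d T : ℕ} (f : Fin m → MvPolynomial (Fin m) ℂ)
    (hf : ∀ i, (f i).totalDegree ≤ d) (b : MvPolynomial (Fin m) ℂ) (hb : b.totalDegree ≤ T) :
    (aeval f b).totalDegree ≤ d * T := by
  rw [aeval_def, eval₂_eq']
  refine totalDegree_finsetSum_le fun s hs => ?_
  refine (totalDegree_mul _ _).trans ?_
  rw [algebraMap_eq, totalDegree_C, zero_add]
  refine (totalDegree_finsetProd _ _).trans ?_
  calc _ ≤ ∑ i, s i * d := Finset.sum_le_sum fun i _ =>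
        (totalDegree_pow _ _).trans (Nat.mul_le_mul_left _ (hf i))
    _ = d * ∑ i, s i := by rw [← Finset.sum_mul, mul_comm]
    _ ≤ _ := by
      refine Nat.mul_le_mul_left _ (le_trans ?_ hb)
      have := le_totalDegree hs
      rwa [Finsupp.sum_fintype _ _ (by simp)] at this

open MvPolynomial in
lemma aux_interp {m : ℕ} (Z : Finset (Fin m → ℂ)) (z : Fin m → ℂ) :
    ∃ g : MvPolynomial (Fin m) ℂ, ∀ w ∈ Z, eval w g = if w = z then 1 else 0 := by
  classical
  have : ∀ w : Fin m → ℂ, ∃ g : MvPolynomial (Fin m) ℂ, eval z g = 1 ∧ (w ≠ z → eval w g = 0) := by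
    intro w
    by_cases h : w = z
    · exact ⟨1, by simp, fun h' => (h' h).elim⟩
    · obtain ⟨i, hi⟩ := Function.ne_iff.1 h
      refine ⟨C ((z i - w i)⁻¹) * (X i - C (w i)), ?_, ?_⟩
      · have : z i - w i ≠ 0 := sub_ne_zero.2 (Ne.symm hi)
        simp [this]
      · simp
  choose g hg1 hg2 using this
  refine ⟨∏ w ∈ Z, g w, fun w hw => ?_⟩
  rw [map_prod]
  split_ifs with h
  · subst h; exact Finset.prod_eq_one fun w _ => hg1 w
  · exact Finset.prod_eq_zero hw (hg2 w h)

open MvPolynomial in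
lemma aux_eval_aeval {m : ℕ} (f : Fin m → MvPolynomial (Fin m) ℂ) (x : Fin m → ℂ)
    (p : MvPolynomial (Fin m) ℂ) :
    eval x (aeval f p) = eval (fun i => eval x (f i)) p := by
  induction p using MvPolynomial.induction_on with
  | C a => simp
  | add p q hp hq => rw [map_add, map_add, map_add, hp, hq]
  | mul_X p i hp => rw [map_mul, map_mul, map_mul, hp, aeval_X, eval_X]

open MvPolynomial in
lemma aux_indep {m : ℕ} (f : Fin m → MvPolynomial (Fin m) ℂ) (c : Fin m → ℂ)
    (Z : Finset (Fin m → ℂ))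
    (hZ : ∀ z ∈ Z, ∀ i, eval z (f i) = c i)
    (hJ : ∀ z ∈ Z, ∀ v : Fin m → ℂ, (∀ i, ∑ j, eval z (pderiv j (f i)) * v j = 0) → v = 0)
    (g : Z → MvPolynomial (Fin m) ℂ)
    (hg : ∀ z w : Z, eval (w : Fin m → ℂ) (g z) = if w = z then 1 else 0)
    (b : Z → MvPolynomial (Fin m) ℂ) (hb : ∑ z, aeval f (b z) * g z = 0) : b = 0 := by
  classical
  -- evaluation map
  let Φ : (Fin m → ℂ) → (Fin m → ℂ) := fun x i => eval x (f i)
  have hmap : ∀ z : Z, Filter.map Φ (nhds (z : Fin m → ℂ)) = nhds c := by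
    intro z
    have hd : HasStrictFDerivAt Φ (ContinuousLinearMap.pi fun i =>
      (∑ j, (eval (z : Fin m → ℂ) (pderiv j (f i))) •
        (ContinuousLinearMap.proj j : (Fin m → ℂ) →L[ℂ] ℂ))) (z : Fin m → ℂ) :=
      hasStrictFDerivAt_pi.2 fun i => aux_hasStrictFDerivAt (f i) z
    have := hd.map_nhds_eq_of_surj ?_
    · rw [this]; congr 1; funext i; exact hZ z z.2 i
    · refine LinearMap.range_eq_top.2 ?_
      refine LinearMap.injective_iff_surjective.1 ?_
      refine (injective_iff_map_eq_zero _).2 fun v hv => ?_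
      refine hJ z z.2 v fun i => ?_
      have := congrFun hv i
      simpa using this
  -- determinant
  let M : (Z → (Fin m → ℂ)) → Matrix Z Z ℂ := fun x => Matrix.of fun w z => eval (x w) (g z)
  have hMc : Continuous fun x => (M x).det := by
    refine Continuous.matrix_det ?_
    refine continuous_matrix fun w z => ?_
    exact (MvPolynomial.continuous_eval (g z)).comp (continuous_apply w)
  have hM1 : (M fun w => (w : Fin m → ℂ)).det ≠ 0 := by
    have : (M fun w => (w : Fin m → ℂ)) = 1 := by
      ext w z
      simp [M, hg, Matrix.one_apply]
    rw [this]; simp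
  have hnear : ∀ᶠ x in nhds (fun w : Z => (w : Fin m → ℂ)), (M x).det ≠ 0 :=
    hMc.continuousAt.eventually_ne hM1
  rw [nhds_pi, Filter.Eventually, Filter.mem_pi] at hnear
  obtain ⟨I, -, U, hU, hUs⟩ := hnear
  have hc : (⋂ z : Z, Φ '' U z) ∈ nhds c := by
    refine Filter.iInter_mem.2 fun z => ?_
    rw [← hmap z]
    exact Filter.image_mem_map (hU z)
  have hvan : ∀ y ∈ (⋂ z : Z, Φ '' U z), ∀ z, eval y (b z) = 0 := by
    intro y hy
    rw [Set.mem_iInter] at hy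
    choose x hx hxy using hy
    have hdet : (M x).det ≠ 0 := hUs (fun i _ => hx i)
    have hmv : (M x).mulVec (fun z => eval y (b z)) = 0 := by
      funext w
      have := congrArg (eval (x w)) hb
      rw [map_sum, map_zero] at this
      rw [Matrix.mulVec, dotProduct, Pi.zero_apply, ← this]
      refine Finset.sum_congr rfl fun z _ => ?_
      have e : eval (x w) (aeval f (b z)) = eval y (b z) := by
        rw [← hxy w]
        exact aux_eval_aeval f (x w) (b z)
      rw [map_mul, e]
      simp [M, mul_comm]
    have := Matrix.eq_zero_of_mulVec_eq_zero hdet hmv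
    exact fun z => congrFun this z
  rw [nhds_pi, Filter.mem_pi] at hc
  obtain ⟨I, -, V, hV, hVs⟩ := hc
  funext z
  refine MvPolynomial.funext_set V (fun i => infinite_of_mem_nhds (c i) (hV i)) fun y hy => ?_
  rw [Pi.zero_apply, map_zero]
  exact hvan y (hVs fun i _ => hy i trivial) z

open MvPolynomial in
theorem aux_bezout {m d : ℕ} (f : Fin m → MvPolynomial (Fin m) ℂ)
    (hf : ∀ i, (f i).totalDegree ≤ d) (c : Fin m → ℂ)
    (Z : Finset (Fin m → ℂ))
    (hZ : ∀ z ∈ Z, ∀ i, eval z (f i) = c i)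
    (hJ : ∀ z ∈ Z, ∀ v : Fin m → ℂ, (∀ i, ∑ j, eval z (pderiv j (f i)) * v j = 0) → v = 0) :
    Z.card ≤ d ^ m := by
  classical
  choose g hg using fun z : Z => aux_interp Z z
  let e := Finset.univ.sup fun z => (g z).totalDegree
  refine aux_limit _ m d e fun T => ?_
  let L : (Z → restrictTotalDegree (Fin m) ℂ T) →ₗ[ℂ] MvPolynomial (Fin m) ℂ :=
    ∑ z : Z, (LinearMap.mulRight ℂ (g z)).comp ((aeval f).toLinearMap.comp
      ((restrictTotalDegree (Fin m) ℂ T).subtype.comp (LinearMap.proj z)))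
  have hL : ∀ b, L b = ∑ z, aeval f (b z : MvPolynomial (Fin m) ℂ) * g z := by
    intro b; rw [LinearMap.sum_apply]; rfl
  have hmem : ∀ b, L b ∈ restrictTotalDegree (Fin m) ℂ (d * T + e) := by
    intro b
    rw [hL, mem_restrictTotalDegree]
    refine totalDegree_finsetSum_le fun z _ => (totalDegree_mul _ _).trans ?_
    refine Nat.add_le_add (aux_totalDegree_bind f hf _ ?_) ?_
    · exact (mem_restrictTotalDegree _ _ _).1 (b z).2
    · exact Finset.le_sup (f := fun z => (g z).totalDegree) (Finset.mem_univ z)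
  have hinj : Function.Injective (L.codRestrict _ hmem) := by
    refine (injective_iff_map_eq_zero _).2 fun b hb => ?_
    have hb' : L b = 0 := congrArg Subtype.val hb
    rw [hL] at hb'
    have := aux_indep f c Z hZ hJ g (fun z w => by
      rw [hg z w w.2]; simp only [Subtype.ext_iff]) (fun z => (b z : MvPolynomial (Fin m) ℂ)) hb'
    funext z
    exact Subtype.ext (congrFun this z)
  have := LinearMap.finrank_le_finrank_of_injective hinj
  rw [Module.finrank_pi_fintype, aux_finrank] at this
  simpa [aux_finrank] using this

noncomputable def auxE (m : ℕ) : Polynomial (MvPolynomial (Fin m) ℂ) :=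
  ∏ j : Fin m, (Polynomial.X - Polynomial.C (MvPolynomial.X j))

noncomputable def auxF (m : ℕ) (i : Fin m) : MvPolynomial (Fin m) ℂ :=
  ∑ k ∈ Finset.range (m + 1), MvPolynomial.C (((m : ℂ) + 2) / ((k : ℂ) + 2)) *
    ((auxE m).coeff k * MvPolynomial.X i ^ (k + 2))

noncomputable def auxQ {m : ℕ} (z : Fin m → ℂ) : Polynomial ℂ :=
  ∑ k ∈ Finset.range (m + 1), Polynomial.C (((m : ℂ) + 2) / ((k : ℂ) + 2) *
    MvPolynomial.eval z ((auxE m).coeff k)) * Polynomial.X ^ (k + 2)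

lemma auxE_natDegree (m : ℕ) : (auxE m).natDegree = m := by
  rw [auxE, Polynomial.natDegree_prod_of_monic _ _ (fun j _ => Polynomial.monic_X_sub_C _)]
  simp

lemma auxE_coeff_m (m : ℕ) : (auxE m).coeff m = 1 := by
  have : (auxE m).Monic := Polynomial.monic_prod_of_monic _ _ (fun j _ => Polynomial.monic_X_sub_C _)
  have h := this.coeff_natDegree
  rwa [auxE_natDegree] at h

lemma auxE_map {m : ℕ} (z : Fin m → ℂ) :
    (auxE m).map (MvPolynomial.eval z) = ∏ j : Fin m, (Polynomial.X - Polynomial.C (z j)) := by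
  simp [auxE, Polynomial.map_prod]

lemma auxE_sum {m : ℕ} (z : Fin m → ℂ) :
    ∑ k ∈ Finset.range (m + 1),
      Polynomial.C (MvPolynomial.eval z ((auxE m).coeff k)) * Polynomial.X ^ k
      = ∏ j : Fin m, (Polynomial.X - Polynomial.C (z j)) := by
  rw [← auxE_map, Polynomial.as_sum_range_C_mul_X_pow' (p := (auxE m).map (MvPolynomial.eval z))
    (n := m + 1)]
  · simp
  · exact lt_of_le_of_lt Polynomial.natDegree_map_le (by rw [auxE_natDegree]; omega)

lemma auxF_eval {m : ℕ} (z : Fin m → ℂ) (i : Fin m) :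
    MvPolynomial.eval z (auxF m i) = (auxQ z).eval (z i) := by
  simp [auxF, auxQ, Polynomial.eval_finsetSum, mul_assoc]

lemma auxQ_derivative {m : ℕ} (z : Fin m → ℂ) :
    Polynomial.derivative (auxQ z) = Polynomial.C ((m : ℂ) + 2) *
      (Polynomial.X * ∏ j : Fin m, (Polynomial.X - Polynomial.C (z j))) := by
  rw [← auxE_sum, auxQ, Polynomial.derivative_sum, Finset.mul_sum, Finset.mul_sum]
  refine Finset.sum_congr rfl fun k _ => ?_
  have hk : ((k : ℂ) + 2) ≠ 0 := by
    have : ((k + 2 : ℕ) : ℂ) ≠ 0 := Nat.cast_ne_zero.2 (by omega)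
    simpa using this
  rw [Polynomial.derivative_C_mul_X_pow]
  have : ((m : ℂ) + 2) / ((k : ℂ) + 2) * MvPolynomial.eval z ((auxE m).coeff k) * ((k + 2 : ℕ) : ℂ)
    = ((m : ℂ) + 2) * MvPolynomial.eval z ((auxE m).coeff k) := by
    push_cast; field_simp
  rw [this, show k + 2 - 1 = k + 1 by omega, Polynomial.C_mul]
  ring

lemma auxQ_eval_zero {m : ℕ} (z : Fin m → ℂ) : (auxQ z).eval 0 = 0 := by
  simp [auxQ, Polynomial.eval_finsetSum]

lemma aux_unique (A B : Polynomial ℂ) (h : Polynomial.derivative A = Polynomial.derivative B)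
    (h0 : A.eval 0 = B.eval 0) : A = B := by
  have h1 : Polynomial.derivative (A - B) = 0 := by simp [h]
  have h2 := Polynomial.eq_C_of_derivative_eq_zero h1
  rw [← sub_eq_zero, h2, Polynomial.coeff_zero_eq_eval_zero]
  simp [h0]

lemma aux_coeff_degree {m : ℕ} (s : Finset (Fin m)) (k : ℕ) :
    (∏ j ∈ s, (Polynomial.X - Polynomial.C (MvPolynomial.X j : MvPolynomial (Fin m) ℂ))).coeff k = 0
    ∨ ((∏ j ∈ s, (Polynomial.X - Polynomial.C
        (MvPolynomial.X j : MvPolynomial (Fin m) ℂ))).coeff k).totalDegree + k ≤ s.card := by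
  classical
  induction s using Finset.induction_on generalizing k with
  | empty =>
    rw [Finset.prod_empty, Polynomial.coeff_one]
    split_ifs with h
    · subst h; simp
    · simp
  | insert a s ha ih =>
    rw [Finset.prod_insert ha, Finset.card_insert_of_notMem ha]
    set p := ∏ j ∈ s, (Polynomial.X - Polynomial.C (MvPolynomial.X j : MvPolynomial (Fin m) ℂ))
    have key : ∀ k, (MvPolynomial.X a * p.coeff k) = 0 ∨
        (MvPolynomial.X a * p.coeff k).totalDegree + k ≤ s.card + 1 := by
      intro k
      rcases ih k with h | h
      · left; simp [h]
      · right
        have := MvPolynomial.totalDegree_mul (MvPolynomial.X a) (p.coeff k)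
        rw [MvPolynomial.totalDegree_X] at this
        omega
    rw [sub_mul, Polynomial.coeff_sub, Polynomial.coeff_C_mul]
    cases k with
    | zero =>
      rw [Polynomial.coeff_X_mul_zero, zero_sub, neg_eq_zero, MvPolynomial.totalDegree_neg]
      exact key 0
    | succ k =>
      rw [Polynomial.coeff_X_mul]
      rcases ih k with h | h
      · rw [h, zero_sub, neg_eq_zero, MvPolynomial.totalDegree_neg]
        exact key (k+1)
      · right
        rcases key (k+1) with h' | h'
        · rw [h', sub_zero]; omega
        · have := MvPolynomial.totalDegree_sub (p.coeff k) (MvPolynomial.X a * p.coeff (k+1))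
          rcases le_max_iff.1 this with h'' | h'' <;> omega

lemma auxF_totalDegree (m : ℕ) (i : Fin m) : (auxF m i).totalDegree ≤ m + 2 := by
  refine MvPolynomial.totalDegree_finsetSum_le fun k _ => ?_
  rcases aux_coeff_degree (Finset.univ : Finset (Fin m)) k with h | h
  · have h' : (auxE m).coeff k = 0 := h
    simp [h']
  · have h' : ((auxE m).coeff k).totalDegree + k ≤ m := by
      have h2 := h
      rw [Finset.card_univ, Fintype.card_fin] at h2
      exact h2
    refine (MvPolynomial.totalDegree_mul _ _).trans ?_
    rw [MvPolynomial.totalDegree_C, zero_add]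
    refine (MvPolynomial.totalDegree_mul _ _).trans ?_
    rw [MvPolynomial.totalDegree_X_pow]
    omega

lemma aux_nondeg {m : ℕ} (z : Fin m → ℂ) (hz : Function.Injective z) (hz0 : ∀ i, z i ≠ 0)
    (v : Fin m → ℂ)
    (hv : ∀ i, ∑ j, MvPolynomial.eval z (MvPolynomial.pderiv j (auxF m i)) * v j = 0) : v = 0 := by
  classical
  let D : Derivation ℂ (MvPolynomial (Fin m) ℂ) (MvPolynomial (Fin m) ℂ) :=
    ∑ j, v j • MvPolynomial.pderiv j
  have hD : ∀ p, D p = ∑ j, v j • MvPolynomial.pderiv j p := by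
    intro p
    have : ∀ s : Finset (Fin m), (∑ j ∈ s, v j • MvPolynomial.pderiv j :
      Derivation ℂ (MvPolynomial (Fin m) ℂ) (MvPolynomial (Fin m) ℂ)) p =
        ∑ j ∈ s, v j • MvPolynomial.pderiv j p := by
      intro s
      induction s using Finset.induction_on with
      | empty => simp
      | insert a s ha ih => rw [Finset.sum_insert ha, Finset.sum_insert ha, ← ih]; rfl
    exact this _
  have hDX : ∀ i, D (MvPolynomial.X i) = MvPolynomial.C (v i) := by
    intro i
    rw [hD, Finset.sum_eq_single i]
    · simp [MvPolynomial.smul_eq_C_mul]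
    · intro b _ hb
      rw [MvPolynomial.pderiv_X_of_ne hb.symm, smul_zero]
    · simp
  have hDpow : ∀ (e : MvPolynomial (Fin m) ℂ) (i : Fin m) (k : ℕ),
      MvPolynomial.eval z (D (e * MvPolynomial.X i ^ k)) =
      MvPolynomial.eval z (D e) * z i ^ k +
        MvPolynomial.eval z e * ((k : ℂ) * z i ^ (k - 1)) * v i := by
    intro e i k
    rw [Derivation.leibniz, Derivation.leibniz_pow, hDX]
    simp
    ring
  have hroot : ∀ i, (∏ j : Fin m, (Polynomial.X - Polynomial.C (z j))).eval (z i) = 0 := by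
    intro i
    rw [Polynomial.eval_prod]
    exact Finset.prod_eq_zero (Finset.mem_univ i) (by simp)
  have hDF : ∀ i, MvPolynomial.eval z (D (auxF m i)) = 0 := by
    intro i
    rw [hD, map_sum, ← hv i]
    refine Finset.sum_congr rfl fun j _ => ?_
    simp [MvPolynomial.smul_eval, mul_comm]
  let w : ℕ → ℂ := fun k => MvPolynomial.eval z (D ((auxE m).coeff k))
  have hwm : w m = 0 := by simp [w, auxE_coeff_m]
  let H : Polynomial ℂ := ∑ k ∈ Finset.range m,
    Polynomial.C (((m : ℂ) + 2) / ((k : ℂ) + 2) * w k) * Polynomial.X ^ k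
  have hHroot : ∀ i, H.eval (z i) = 0 := by
    intro i
    have h1 := hDF i
    have h2 := congrArg (Polynomial.eval (z i)) (auxE_sum z)
    rw [hroot, Polynomial.eval_finsetSum] at h2
    rw [auxF, map_sum, map_sum] at h1
    have h3 : ∀ k ∈ Finset.range (m+1), MvPolynomial.eval z (D (MvPolynomial.C (((m : ℂ) + 2) / ((k : ℂ) + 2)) *
    ((auxE m).coeff k * MvPolynomial.X i ^ (k + 2)))) = z i ^ 2 * 
      (((m : ℂ) + 2) / ((k : ℂ) + 2) * w k * z i ^ k) + ((m : ℂ) + 2) * z i * v i *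
      Polynomial.eval (z i) (Polynomial.C (MvPolynomial.eval z ((auxE m).coeff k)) * Polynomial.X ^ k) := by
      intro k _
      have hk : ((k : ℂ) + 2) ≠ 0 := by
        have : ((k + 2 : ℕ) : ℂ) ≠ 0 := Nat.cast_ne_zero.2 (by omega)
        simpa using this
      rw [← MvPolynomial.smul_eq_C_mul, Derivation.map_smul, MvPolynomial.smul_eval, hDpow]
      simp only [w, Polynomial.eval_mul, Polynomial.eval_C, Polynomial.eval_pow, Polynomial.eval_X,
        show k + 2 - 1 = k + 1 by omega]
      push_cast
      field_simp
      ring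
    rw [Finset.sum_congr rfl h3, Finset.sum_add_distrib, ← Finset.mul_sum, ← Finset.mul_sum, h2,
      mul_zero, add_zero, Finset.sum_range_succ, hwm] at h1
    have h4 := (mul_eq_zero.1 h1).resolve_left (pow_ne_zero _ (hz0 i))
    simpa [H, Polynomial.eval_finsetSum] using h4
  have hH : H = 0 := by
    refine Polynomial.eq_zero_of_degree_lt_of_eval_index_eq_zero (v := z) Finset.univ
      (fun a _ b _ h => hz h) ?_ (fun i _ => hHroot i)
    rw [Finset.card_univ, Fintype.card_fin]
    refine Polynomial.mem_degreeLT.1 (Submodule.sum_mem _ fun k hk => Polynomial.mem_degreeLT.2 ?_)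
    refine (Polynomial.degree_C_mul_X_pow_le _ _).trans_lt ?_
    exact_mod_cast Finset.mem_range.1 hk
  have hw : ∀ k ∈ Finset.range (m + 1), w k = 0 := by
    intro k hk
    rcases Nat.lt_succ_iff_lt_or_eq.1 (Finset.mem_range.1 hk) with h | h
    · have := congrArg (fun p => Polynomial.coeff p k) hH
      simp only [H, Polynomial.finsetSum_coeff, Polynomial.coeff_C_mul_X_pow,
        Finset.sum_ite_eq, Finset.mem_range, h, if_true, Polynomial.coeff_zero] at this
      refine (mul_eq_zero.1 this).resolve_left (div_ne_zero ?_ ?_)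
      · exact_mod_cast (by omega : m + 2 ≠ 0)
      · exact_mod_cast (by omega : k + 2 ≠ 0)
    · rw [h]; exact hwm
  funext i
  have h5 : (auxE m).eval (MvPolynomial.X i) = 0 := by
    rw [auxE, Polynomial.eval_prod]
    exact Finset.prod_eq_zero (Finset.mem_univ i) (by simp)
  have h6 := congrArg (fun p => MvPolynomial.eval z (D p)) h5
  simp only [map_zero] at h6
  rw [Polynomial.eval_eq_sum_range, auxE_natDegree, map_sum, map_sum] at h6
  have h7 : ∀ k ∈ Finset.range (m + 1),
      MvPolynomial.eval z (D ((auxE m).coeff k * MvPolynomial.X i ^ k)) =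
      Polynomial.eval (z i) (Polynomial.derivative (Polynomial.C
        (MvPolynomial.eval z ((auxE m).coeff k)) * Polynomial.X ^ k)) * v i := by
    intro k hk
    have := hw k hk
    simp only [w] at this
    rw [hDpow, this, Polynomial.derivative_C_mul_X_pow]
    simp only [Polynomial.eval_mul, Polynomial.eval_C, Polynomial.eval_pow, Polynomial.eval_X]
    ring
  rw [Finset.sum_congr rfl h7, ← Finset.sum_mul, ← Polynomial.eval_finsetSum,
    ← Polynomial.derivative_sum, auxE_sum] at h6
  refine (mul_eq_zero.1 h6).resolve_left ?_
  rw [Polynomial.derivative_prod_finset, Polynomial.eval_finsetSum, Finset.sum_eq_single i]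
  · simp only [Polynomial.derivative_sub, Polynomial.derivative_X, Polynomial.derivative_C, sub_zero, mul_one, Polynomial.eval_prod]
    refine Finset.prod_ne_zero_iff.2 fun j hj => ?_
    have : j ≠ i := Finset.ne_of_mem_erase hj
    simp only [Polynomial.eval_sub, Polynomial.eval_X, Polynomial.eval_C]
    exact sub_ne_zero.2 fun h => this (hz h).symm
  · intro b _ hb
    rw [Polynomial.eval_mul, Polynomial.eval_prod]
    rw [Finset.prod_eq_zero (i := i) (Finset.mem_erase.2 ⟨hb.symm, Finset.mem_univ _⟩) (by simp)]
    simp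
  · simp

/-- The monic polynomial with roots `l`. -/
noncomputable def auxP {k : ℕ} (l : Fin k → ℂ) : Polynomial ℂ :=
  ∏ j, (Polynomial.X - Polynomial.C (l j))

lemma auxP_eval {k : ℕ} (l : Fin k → ℂ) (t : ℂ) : (auxP l).eval t = ∏ j, (t - l j) := by
  simp [auxP, Polynomial.eval_prod]

lemma auxP_eval_eq_zero {k : ℕ} (l : Fin k → ℂ) (t : ℂ) :
    (auxP l).eval t = 0 ↔ ∃ j, t = l j := by
  rw [auxP_eval, Finset.prod_eq_zero_iff]
  simp [sub_eq_zero]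

lemma auxP_perm {k : ℕ} (l : Fin k → ℂ) (π : Equiv.Perm (Fin k)) :
    auxP (fun i => l (π i)) = auxP l := by
  unfold auxP
  exact Equiv.prod_comp π (fun j => (Polynomial.X - Polynomial.C (l j)))

lemma auxP_scale {k : ℕ} (l : Fin k → ℂ) (ω : ℂ) (hω : ω ≠ 0) :
    (auxP l).comp (Polynomial.C ω⁻¹ * Polynomial.X) =
      Polynomial.C (ω⁻¹ ^ k) * auxP (fun i => ω * l i) := by
  refine Polynomial.funext fun t => ?_
  rw [Polynomial.eval_comp, auxP_eval]
  simp only [Polynomial.eval_mul, Polynomial.eval_C, Polynomial.eval_X, auxP_eval]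
  have : ω⁻¹ ^ k = ∏ _j : Fin k, ω⁻¹ := by simp
  rw [this, ← Finset.prod_mul_distrib]
  refine Finset.prod_congr rfl fun j _ => ?_
  field_simp

/-- `l` is centered with ordered critical points `κ` and critical values `r`. -/
def auxGood {m : ℕ} (r : Fin (m + 1) → ℂ) (l : Fin (m + 2) → ℂ) (κ : Fin (m + 1) → ℂ) : Prop :=
  Function.Injective l ∧ ∑ i, l i = 0 ∧ Function.Injective κ ∧
    Polynomial.derivative (auxP l) = Polynomial.C ((m : ℂ) + 2) * auxP κ ∧
    ∀ j, (auxP l).eval (κ j) = r j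

/-- Normalized critical points. -/
def auxz {m : ℕ} (κ : Fin (m + 1) → ℂ) : Fin m → ℂ := fun j => κ j.succ - κ 0

lemma auxGood_comp {m : ℕ} {r : Fin (m + 1) → ℂ} {l : Fin (m + 2) → ℂ} {κ : Fin (m + 1) → ℂ}
    (h : auxGood r l κ) :
    (auxP l).comp (Polynomial.X + Polynomial.C (κ 0)) = auxQ (auxz κ) + Polynomial.C (r 0) := by
  obtain ⟨-, -, -, hd, hr⟩ := h
  refine aux_unique _ _ ?_ ?_
  · have hR := auxQ_derivative (auxz κ)
    have hR2 : Polynomial.derivative (auxQ (auxz κ) + Polynomial.C (r 0)) =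
        Polynomial.derivative (auxQ (auxz κ)) := by
      rw [Polynomial.derivative_add, Polynomial.derivative_C, add_zero]
    rw [Polynomial.derivative_comp, hd, hR2, hR]
    simp only [Polynomial.derivative_add, Polynomial.derivative_X, Polynomial.derivative_C,
      add_zero, one_mul, auxP, Fin.prod_univ_succ, Polynomial.mul_comp, Polynomial.C_comp,
      Polynomial.sub_comp, Polynomial.X_comp, Polynomial.prod_comp, auxz, Polynomial.C_sub]
    rw [add_sub_cancel_right]
    congr 2
    refine Finset.prod_congr rfl fun j _ => ?_
    ring
  · simp [auxQ_eval_zero, hr]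

lemma auxGood_evalF {m : ℕ} {r : Fin (m + 1) → ℂ} {l : Fin (m + 2) → ℂ} {κ : Fin (m + 1) → ℂ}
    (h : auxGood r l κ) (i : Fin m) :
    MvPolynomial.eval (auxz κ) (auxF m i) = r i.succ - r 0 := by
  have h1 := congrArg (Polynomial.eval (auxz κ i)) (auxGood_comp h)
  rw [Polynomial.eval_comp] at h1
  simp only [Polynomial.eval_add, Polynomial.eval_X, Polynomial.eval_C] at h1
  rw [← auxF_eval] at h1
  have h2 : auxz κ i + κ 0 = κ i.succ := by simp [auxz]
  rw [h2, h.2.2.2.2] at h1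
  rw [h1, add_sub_cancel_right]

lemma auxGood_perm {m : ℕ} {r : Fin (m + 1) → ℂ} {l l' : Fin (m + 2) → ℂ}
    {κ κ' : Fin (m + 1) → ℂ} (h : auxGood r l κ) (h' : auxGood r l' κ')
    (hz : auxz κ = auxz κ') : ∃ π : Equiv.Perm (Fin (m + 2)), ∀ i, l' i = l (π i) := by
  have h1 : (auxP l).comp (Polynomial.X + Polynomial.C (κ 0)) =
      (auxP l').comp (Polynomial.X + Polynomial.C (κ' 0)) := by
    rw [auxGood_comp h, auxGood_comp h', hz]
  have h2 : ∀ i, ∃ j, l i - κ 0 + κ' 0 = l' j := by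
    intro i
    have := congrArg (Polynomial.eval (l i - κ 0)) h1
    rw [Polynomial.eval_comp, Polynomial.eval_comp] at this
    simp only [Polynomial.eval_add, Polynomial.eval_X, Polynomial.eval_C, sub_add_cancel] at this
    rw [← auxP_eval_eq_zero, ← this, auxP_eval_eq_zero]
    exact ⟨i, rfl⟩
  choose σ hσ using h2
  have hσi : Function.Injective σ := by
    intro a b hab
    have := (hσ a).trans ((congrArg l' hab).trans (hσ b).symm)
    exact h.1 (by linear_combination this)
  have hσb : Function.Bijective σ := Finite.injective_iff_bijective.1 hσi
  let e := Equiv.ofBijective σ hσb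
  have hs : ∑ i, l' (e i) = 0 := by rw [Equiv.sum_comp e l']; exact h'.2.1
  have hs2 : ∑ i, l' (e i) = ((m : ℂ) + 2) * (κ' 0 - κ 0) := by
    have : ∀ i, l' (e i) = l i + (κ' 0 - κ 0) := by
      intro i
      have : l' (e i) = l' (σ i) := rfl
      rw [this, ← hσ i]; ring
    simp only [this, Finset.sum_add_distrib, h.2.1]
    simp
    ring
  have hm : ((m : ℂ) + 2) ≠ 0 := by exact_mod_cast (by omega : m + 2 ≠ 0)
  have hk : κ' 0 - κ 0 = 0 := by
    rw [hs] at hs2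
    exact (mul_eq_zero.1 hs2.symm).resolve_left hm
  refine ⟨e.symm, fun i => ?_⟩
  have := hσ (e.symm i)
  have h3 : σ (e.symm i) = i := e.apply_symm_apply i
  rw [h3] at this
  rw [← this]
  linear_combination hk

lemma auxGood_scale {m : ℕ} {r : Fin (m + 1) → ℂ} {l : Fin (m + 2) → ℂ} {κ : Fin (m + 1) → ℂ}
    (h : auxGood r l κ) (ω : ℂ) (hω : ω ^ (m + 2) = 1) :
    auxGood r (fun i => ω * l i) (fun i => ω * κ i) := by
  have hω0 : ω ≠ 0 := by rintro rfl; simp at hω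
  obtain ⟨hl, hs, hκ, hd, hr⟩ := h
  have e1 := auxP_scale l ω hω0
  rw [inv_pow, hω, inv_one, Polynomial.C_1, one_mul] at e1
  refine ⟨fun a b hab => hl (mul_left_cancel₀ hω0 hab), ?_,
    fun a b hab => hκ (mul_left_cancel₀ hω0 hab), ?_, ?_⟩
  · rw [← Finset.mul_sum, hs, mul_zero]
  · rw [← e1, Polynomial.derivative_comp, hd, Polynomial.mul_comp, auxP_scale κ ω hω0,
      Polynomial.derivative_C_mul, Polynomial.derivative_X, mul_one, Polynomial.C_comp]
    have : Polynomial.C ω⁻¹ * Polynomial.C (ω⁻¹ ^ (m + 1)) = 1 := by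
      rw [← Polynomial.C_mul, ← pow_succ', inv_pow, hω, inv_one, Polynomial.C_1]
    linear_combination (Polynomial.C ((m : ℂ) + 2) * auxP (fun i => ω * κ i)) * this
  · intro j
    rw [← e1, Polynomial.eval_comp, ← hr j]
    simp [hω0]

lemma auxGood_free {m : ℕ} (hm : 1 ≤ m) {r : Fin (m + 1) → ℂ} (hrinj : Function.Injective r)
    {l : Fin (m + 2) → ℂ} {κ : Fin (m + 1) → ℂ}
    (h : auxGood r l κ) (ω : ℂ) (hω : ω ^ (m + 2) = 1) (π : Equiv.Perm (Fin (m + 2)))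
    (hπ : ∀ i, l i = ω * l (π i)) : ω = 1 := by
  have h2 := auxGood_scale h ω hω
  have hP : auxP (fun i => ω * l i) = auxP l := by
    rw [← auxP_perm _ π]
    congr 1
    funext i
    exact (hπ i).symm
  have hm0 : ((m : ℂ) + 2) ≠ 0 := by exact_mod_cast (by omega : m + 2 ≠ 0)
  have hfix : ∀ j, ω * κ j = κ j := by
    intro j
    have h3 := h2.2.2.2.1
    rw [hP, h.2.2.2.1] at h3
    have h4 := mul_left_cancel₀ (Polynomial.C_ne_zero.2 hm0) h3
    have h5 : (auxP κ).eval (ω * κ j) = 0 := by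
      rw [h4, auxP_eval_eq_zero]; exact ⟨j, rfl⟩
    obtain ⟨k, hk⟩ := (auxP_eval_eq_zero _ _).1 h5
    have h6 := h2.2.2.2.2 j
    rw [hP] at h6
    simp only [hk] at h6
    rw [h.2.2.2.2 k] at h6
    rw [hk, hrinj h6]
  by_contra hne
  have hz : ∀ j, κ j = 0 := by
    intro j
    have : (ω - 1) * κ j = 0 := by linear_combination hfix j
    exact (mul_eq_zero.1 this).resolve_left (sub_ne_zero.2 hne)
  have := h.2.2.1 ((hz ⟨0, by omega⟩).trans (hz ⟨1, by omega⟩).symm)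
  simp at this

lemma aux_Z {m : ℕ} (r : Fin (m + 1) → ℂ) :
    ({z : Fin m → ℂ | Function.Injective z ∧ (∀ i, z i ≠ 0) ∧
      ∀ i, MvPolynomial.eval z (auxF m i) = r i.succ - r 0}).Finite ∧
    ({z : Fin m → ℂ | Function.Injective z ∧ (∀ i, z i ≠ 0) ∧
      ∀ i, MvPolynomial.eval z (auxF m i) = r i.succ - r 0}).ncard ≤ (m + 2) ^ m := by
  set Z := {z : Fin m → ℂ | Function.Injective z ∧ (∀ i, z i ≠ 0) ∧
      ∀ i, MvPolynomial.eval z (auxF m i) = r i.succ - r 0} with hZ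
  have key : ∀ W : Finset (Fin m → ℂ), (W : Set (Fin m → ℂ)) ⊆ Z → W.card ≤ (m + 2) ^ m := by
    intro W hW
    exact aux_bezout (auxF m) (auxF_totalDegree m) (fun i => r i.succ - r 0) W
      (fun z hz => (hW hz).2.2)
      (fun z hz v hv => aux_nondeg z (hW hz).1 (hW hz).2.1 v hv)
  have hfin : Z.Finite := by
    by_contra hinf
    obtain ⟨W, hW, hc⟩ := Set.Infinite.exists_subset_card_eq hinf ((m + 2) ^ m + 1)
    have := key W hW
    omega
  refine ⟨hfin, ?_⟩
  rw [Set.ncard_eq_toFinset_card Z hfin]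
  exact key _ (by simp)

theorem aux_core (p : ℕ) (r : Fin (p + 2) → ℂ) (hr : Function.Injective r)
    (S : Set (Fin (p + 3) → ℂ))
    (hS : S = {l | ∏ i, l i = 1 ∧ ∃ κ : Fin (p + 2) → ℂ, auxGood r l κ}) :
    S.Finite ∧ ∃ F : S → Fin ((p + 3) ^ p), ∀ x y : S,
      F x = F y ↔ ∃ ω : ℂ, ω ^ (p + 3) = 1 ∧ ∃ π : Equiv.Perm (Fin (p + 3)),
        ∀ i, (y : Fin (p + 3) → ℂ) i = ω * (x : Fin (p + 3) → ℂ) (π i) := by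
  classical
  obtain ⟨hZfin, hZcard⟩ := aux_Z (m := p + 1) r
  set Z := {z : Fin (p + 1) → ℂ | Function.Injective z ∧ (∀ i, z i ≠ 0) ∧
      ∀ i, MvPolynomial.eval z (auxF (p + 1) i) = r i.succ - r 0} with hZ
  have hSm : ∀ l, l ∈ S ↔ (∏ i, l i = 1 ∧ ∃ κ : Fin (p + 2) → ℂ, auxGood r l κ) := by
    intro l; rw [hS]; rfl
  have hex : ∀ x : S, ∃ κ : Fin (p + 2) → ℂ, auxGood r (x : Fin (p + 3) → ℂ) κ := by
    intro x
    exact ((hSm _).1 x.2).2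
  choose κ hκ using hex
  have hmem : ∀ x : S, auxz (κ x) ∈ Z := by
    intro x
    refine ⟨fun a b hab => ?_, fun i hi => ?_, auxGood_evalF (hκ x)⟩
    · have : κ x a.succ = κ x b.succ := by simpa [auxz] using hab
      exact Fin.succ_injective _ ((hκ x).2.2.1 this)
    · have : κ x i.succ = κ x 0 := sub_eq_zero.1 hi
      exact Fin.succ_ne_zero _ ((hκ x).2.2.1 this)
  let φ : S → Z := fun x => ⟨auxz (κ x), hmem x⟩
  have hφ : ∀ x y : S, φ x = φ y → ∃ π : Equiv.Perm (Fin (p + 3)),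
      ∀ i, (y : Fin (p + 3) → ℂ) i = (x : Fin (p + 3) → ℂ) (π i) := by
    intro x y hxy
    exact auxGood_perm (hκ x) (hκ y) (congrArg Subtype.val hxy)
  haveI : Finite Z := hZfin.to_subtype
  have hSfin : Finite S := by
    refine Set.finite_univ_iff.1 ?_
    rw [← Set.preimage_univ (f := φ)]
    refine Set.Finite.preimage' Set.finite_univ fun z _ => ?_
    by_cases hne : ∃ x, φ x = z
    · obtain ⟨x, hx⟩ := hne
      refine Set.Finite.subset (Set.Finite.preimage Subtype.val_injective.injOn
        (Set.finite_range fun π : Equiv.Perm (Fin (p + 3)) =>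
          fun i => (x : Fin (p + 3) → ℂ) (π i))) ?_
      intro y hy
      obtain ⟨π, hπ⟩ := hφ x y (hx.trans hy.symm)
      exact ⟨π, funext fun i => (hπ i).symm⟩
    · refine Set.Finite.subset Set.finite_empty fun y hy => hne ⟨y, hy⟩
  refine ⟨S.toFinite, ?_⟩
  have hscale : ∀ (x : S) (ω : ℂ), ω ^ (p + 3) = 1 →
      (fun i => ω * (x : Fin (p + 3) → ℂ) i) ∈ S := by
    intro x ω hω
    have hx := (hSm _).1 x.2
    refine (hSm _).2 ⟨?_, _, auxGood_scale (hκ x) ω hω⟩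
    rw [Finset.prod_mul_distrib, hx.1]
    simp [hω]
  let st : Setoid S :=
    { r := fun x y => ∃ ω : ℂ, ω ^ (p + 3) = 1 ∧ ∃ π : Equiv.Perm (Fin (p + 3)),
        ∀ i, (y : Fin (p + 3) → ℂ) i = ω * (x : Fin (p + 3) → ℂ) (π i)
      iseqv :=
        { refl := fun x => ⟨1, by simp, 1, by simp⟩
          symm := by
            rintro x y ⟨ω, hω, π, h⟩
            have hω0 : ω ≠ 0 := by rintro rfl; simp at hω
            refine ⟨ω⁻¹, by rw [inv_pow, hω, inv_one], π⁻¹, fun i => ?_⟩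
            rw [h]; simp [hω0]
          trans := by
            rintro x y z ⟨ω, hω, π, h⟩ ⟨ω', hω', π', h'⟩
            refine ⟨ω' * ω, by rw [mul_pow, hω, hω', one_mul], π * π', fun i => ?_⟩
            rw [h', h]; simp [mul_assoc] } }
  have hroot : ∀ ω : rootsOfUnity (p + 3) ℂ, ((ω : ℂˣ) : ℂ) ^ (p + 3) = 1 := by
    intro ω
    have := (mem_rootsOfUnity (p + 3) (ω : ℂˣ)).1 ω.2
    rw [← Units.val_pow_eq_pow_val, this, Units.val_one]
  let ψ : Quotient st × rootsOfUnity (p + 3) ℂ → Z := fun q =>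
    φ ⟨_, hscale q.1.out ((q.2 : ℂˣ) : ℂ) (hroot q.2)⟩
  have hψ : Function.Injective ψ := by
    rintro ⟨q, ω⟩ ⟨q', ω'⟩ h
    obtain ⟨π, hπ⟩ := hφ _ _ h
    simp only at hπ
    have hω := hroot ω
    have hω' := hroot ω'
    have hω0 : ((ω' : ℂˣ) : ℂ) ≠ 0 := Units.ne_zero _
    have hdiv : (((ω : ℂˣ) : ℂ) / ((ω' : ℂˣ) : ℂ)) ^ (p + 3) = 1 := by
      rw [div_pow, hω, hω', div_one]
    have hrel : ∀ i, (q'.out : Fin (p + 3) → ℂ) i =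
        (((ω : ℂˣ) : ℂ) / ((ω' : ℂˣ) : ℂ)) * (q.out : Fin (p + 3) → ℂ) (π i) := by
      intro i
      have := hπ i
      field_simp
      linear_combination this
    have hq : q = q' := by
      rw [← Quotient.out_eq q, ← Quotient.out_eq q']
      exact Quotient.sound ⟨_, hdiv, π, hrel⟩
    subst hq
    have h1 := auxGood_free (by omega) hr (hκ q.out) _ hdiv π hrel
    rw [div_eq_one_iff_eq hω0] at h1
    rw [Subtype.ext (Units.ext h1)]
  have hcard := Nat.card_le_card_of_injective ψ hψ
  rw [Nat.card_prod, Complex.card_rootsOfUnity, Nat.card_coe_set_eq] at hcard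
  have hle : Nat.card (Quotient st) ≤ (p + 3) ^ p := by
    have h1 : Nat.card (Quotient st) * (p + 3) ≤ (p + 3) ^ p * (p + 3) := by
      rw [← pow_succ]
      exact hcard.trans hZcard
    exact Nat.le_of_mul_le_mul_right h1 (by omega)
  let e := Finite.equivFin (Quotient st)
  refine ⟨fun x => Fin.castLE hle (e (Quotient.mk st x)), fun x y => ?_⟩
  rw [(Fin.castLE_injective hle).eq_iff, e.injective.eq_iff, Quotient.eq]
  rfl

theorem stmt_12 (n : ℕ) (hn : 3 ≤ n) (R : Multiset ℂ)
    (hRcard : Multiset.card R = n - 1) (hRnd : R.Nodup) (hR0 : (0 : ℂ) ∉ R)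
    (S : Set (Fin n → ℂ))
    (hS : S = {l | Function.Injective l ∧ ∑ i, l i = 0 ∧ ∏ i, l i = 1 ∧
      ∃ κ : Fin (n - 1) → ℂ, Function.Injective κ ∧
        Polynomial.derivative (∏ j : Fin n, (Polynomial.X - Polynomial.C (l j))) =
          Polynomial.C (n : ℂ) *
            ∏ j : Fin (n - 1), (Polynomial.X - Polynomial.C (κ j)) ∧
        (Finset.univ.val.map (fun j : Fin (n - 1) =>
          (∏ i : Fin n, (Polynomial.X - Polynomial.C (l i))).eval (κ j)) :
            Multiset ℂ) = R}) :
    S.Finite ∧ ∃ F : S → Fin (n ^ (n - 3)), ∀ x y : S,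
      F x = F y ↔ ∃ ω : ℂ, ω ^ n = 1 ∧ ∃ π : Equiv.Perm (Fin n),
        ∀ i, (y : Fin n → ℂ) i = ω * (x : Fin n → ℂ) (π i) := by
  obtain ⟨p, rfl⟩ : ∃ p, n = p + 3 := ⟨n - 3, by omega⟩
  change Multiset.card R = p + 2 at hRcard
  have hlen : R.toList.length = p + 2 := by simp [hRcard]
  let r : Fin (p + 2) → ℂ := fun j => R.toList.get (j.cast hlen.symm)
  have hnd : R.toList.Nodup := by
    rw [← Multiset.coe_nodup, Multiset.coe_toList]; exact hRnd
  have hr : Function.Injective r := by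
    intro a b hab
    have := (List.nodup_iff_injective_get.1 hnd) hab
    exact Fin.cast_injective _ this
  have hrR : (Finset.univ.val.map r : Multiset ℂ) = R := by
    refine Multiset.eq_of_le_of_card_le ?_ ?_
    · refine (Multiset.le_iff_subset ?_).2 ?_
      · exact (Multiset.nodup_map_iff_of_injective hr).2 Finset.univ.nodup
      · intro a ha
        obtain ⟨j, -, rfl⟩ := Multiset.mem_map.1 ha
        exact Multiset.mem_toList.1 (List.get_mem _ _)
    · simp [hRcard]
  refine aux_core p r hr S ?_
  rw [hS]
  have hc : ((p + 3 : ℕ) : ℂ) = ((p + 1 : ℕ) : ℂ) + 2 := by push_cast; ring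
  ext l
  constructor
  · rintro ⟨hl, hs, hp, (κ : Fin (p + 2) → ℂ), hκ, hd, hv⟩
    refine ⟨hp, ?_⟩
    have hex : ∀ j, ∃ k : Fin (p + 2), (auxP l).eval (κ k) = r j := by
      intro j
      have : r j ∈ R := by
        rw [← hrR]; exact Multiset.mem_map_of_mem _ (Finset.mem_univ j)
      rw [← hv] at this
      obtain ⟨k, -, hk⟩ := Multiset.mem_map.1 this
      exact ⟨k, hk⟩
    choose σ hσ using hex
    have hσi : Function.Injective σ := by
      intro a b hab
      apply hr
      rw [← hσ a, ← hσ b, hab]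
    let e : Equiv.Perm (Fin (p + 2)) :=
      Equiv.ofBijective σ (Finite.injective_iff_bijective.1 hσi)
    refine ⟨fun j => κ (e j), hl, hs, fun a b hab => e.injective (hκ hab), ?_, hσ⟩
    have hP : auxP (fun j : Fin (p + 2) => κ (e j)) = auxP κ := auxP_perm κ e
    have hd2 : Polynomial.derivative (auxP l) =
        Polynomial.C ((p + 3 : ℕ) : ℂ) * auxP κ := hd
    rw [hc, ← hP] at hd2
    exact hd2
  · rintro ⟨hp, κ, hl, hs, hκ, hd, hv⟩
    refine ⟨hl, hs, hp, κ, hκ, ?_, ?_⟩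
    · rw [← hc] at hd
      exact hd
    · rw [← hrR]
      exact Multiset.map_congr rfl fun j _ => hv j
end

section
/- Let n ≥ 2 and let R be a multiset of n−1 pairwise distinct nonzero complex numbers. Let S be the set of injective tuples λ = (λ₁,…,λₙ) ∈ (ℂ∖{0})ⁿ with λ₁⋯λₙ = 1 such that Q_λ(t) = ∏_{j=1}^{n}(t−λ_j) has n−1 pairwise distinct critical points and its multiset of critical values equals R. Then S is finite and the number of equivalence classes of S under the relation λ ∼ λ′ iff there exist ω ∈ ℂ with ωⁿ = 1 and a permutation π with λ′_i = ω·λ_{π(i)} is at most n^{n−2}. (Equivalently: for type III commode quasi-homogeneous functions, each non-degenerate value of the Henry–Parusiński invariant is realized by at most n^{n−2} distinct analytic equivalence classes.) -/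
open Filter Topology

lemma hp_card (m s : ℕ) :
    Module.finrank ℂ (MvPolynomial.restrictTotalDegree (Fin m) ℂ s) = (s + m).choose m := by
  classical
  have hset : ({n : Fin m →₀ ℕ | (n.sum fun _ e => e) ≤ s} : Set (Fin m →₀ ℕ)) =
      ((Finset.range (s+1)).biUnion fun k => (Finset.univ : Finset (Fin m)).finsuppAntidiag k :
        Finset (Fin m →₀ ℕ)) := by
    ext α
    simp [Finset.mem_finsuppAntidiag, Finsupp.sum_fintype]
  have hcard : Nat.card ({n : Fin m →₀ ℕ | (n.sum fun _ e => e) ≤ s} : Set (Fin m →₀ ℕ)) =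
      (s + m).choose m := by
    rw [hset]
    simp only [Finset.coe_sort_coe, Nat.card_eq_fintype_card, Fintype.card_coe]
    rw [Finset.card_biUnion]
    · simp only [Finset.card_finsuppAntidiag_nat_eq_multichoose, Finset.card_univ, Fintype.card_fin]
      have : ∀ s, ∑ k ∈ Finset.range (s+1), m.multichoose k = (m+1).multichoose s := by
        intro s
        induction s with
        | zero => simp
        | succ s ih => rw [Finset.sum_range_succ, ih, Nat.multichoose_succ_succ, add_comm]
      rw [this, Nat.multichoose_eq, show m + 1 + s - 1 = s + m by omega]
      exact Nat.choose_symm_add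
    · intro a _ b _ hab
      rw [Function.onFun, Finset.disjoint_left]
      intro x hx hx'
      rw [Finset.mem_finsuppAntidiag] at hx hx'
      exact hab (hx.1.symm.trans hx'.1)
  rw [← hcard]
  exact Module.finrank_eq_nat_card_basis (MvPolynomial.basisRestrictSupport ℂ _)

lemma hp_limit (m d N e : ℕ)
    (h : ∀ s, N * (s + m).choose m ≤ (d * s + e + m).choose m) : N ≤ d ^ m := by
  have h1 : ∀ s : ℕ, (N : ℝ) * (s : ℝ) ^ m ≤ ((d : ℝ) * s + (e + m)) ^ m := by
    intro s
    have hs := h s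
    have a1 : ((s + m + 1 - m : ℕ) ^ m : ℝ) / m.factorial ≤ (s+m).choose m :=
      Nat.pow_le_choose m (s+m)
    have a2 : ((d * s + e + m).choose m : ℝ) ≤ ((d * s + e + m : ℕ) ^ m : ℝ) / m.factorial :=
      Nat.choose_le_pow_div m _
    have hs' : (N : ℝ) * ((s + m).choose m : ℕ) ≤ ((d * s + e + m).choose m : ℕ) := by
      exact_mod_cast hs
    have hf : (0 : ℝ) < m.factorial := by positivity
    have a3 : (s : ℝ)^m ≤ ((s + m + 1 - m : ℕ) : ℝ) ^ m := by
      gcongr; omega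
    rw [div_le_iff₀ hf] at a1
    rw [le_div_iff₀ hf] at a2
    calc (N : ℝ) * (s : ℝ) ^ m ≤ N * (((s + m).choose m : ℕ) * m.factorial) := by
          gcongr; exact a3.trans a1
      _ ≤ ((d * s + e + m).choose m : ℕ) * m.factorial := by
          rw [← mul_assoc]; gcongr
      _ ≤ _ := a2
      _ = _ := by push_cast; ring
  have h2 : ∀ᶠ s : ℕ in atTop, (N : ℝ) ≤ ((d : ℝ) + (e + m) / s) ^ m := by
    filter_upwards [eventually_gt_atTop 0] with s hs
    have hs0 : (0 : ℝ) < s := by exact_mod_cast hs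
    have := h1 s
    rw [show (d : ℝ) * s + (e + m) = (d + (e+m)/s) * s by field_simp, mul_pow] at this
    exact le_of_mul_le_mul_right this (by positivity)
  have h3 : Tendsto (fun s : ℕ => ((d : ℝ) + (e + m) / s) ^ m) atTop (𝓝 (((d : ℝ) + 0) ^ m)) :=
    (tendsto_const_nhds.add (tendsto_const_div_atTop_nhds_zero_nat _)).pow m
  have := ge_of_tendsto h3 h2
  rw [add_zero] at this
  exact_mod_cast this

lemma hp_aeval_degree {m d s : ℕ} (f : Fin m → MvPolynomial (Fin m) ℂ)
    (hf : ∀ i, (f i).totalDegree ≤ d) (c : MvPolynomial (Fin m) ℂ) (hc : c.totalDegree ≤ s) :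
    (MvPolynomial.aeval f c).totalDegree ≤ d * s := by
  rw [MvPolynomial.aeval_def, MvPolynomial.eval₂_eq']
  refine MvPolynomial.totalDegree_finsetSum_le ?_
  intro α hα
  refine (MvPolynomial.totalDegree_mul _ _).trans ?_
  rw [MvPolynomial.algebraMap_eq, MvPolynomial.totalDegree_C, zero_add]
  refine (MvPolynomial.totalDegree_finsetProd _ _).trans ?_
  calc ∑ i, (f i ^ α i).totalDegree ≤ ∑ i, α i * d := by
        refine Finset.sum_le_sum fun i _ => ?_
        exact (MvPolynomial.totalDegree_pow _ _).trans (Nat.mul_le_mul_left _ (hf i))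
    _ = d * ∑ i, α i := by rw [← Finset.sum_mul, mul_comm]
    _ ≤ d * s := by
        refine Nat.mul_le_mul_left _ (le_trans ?_ hc)
        have := MvPolynomial.le_totalDegree hα
        rwa [Finsupp.sum_fintype _ _ (fun _ => rfl)] at this

/-- Bezout's bound on the number of points of a fibre near which the map is open. -/
lemma hp_bezout {m d N : ℕ} (f : Fin m → MvPolynomial (Fin m) ℂ)
    (hf : ∀ i, (f i).totalDegree ≤ d) (y0 : Fin m → ℂ) (p : Fin N → Fin m → ℂ)
    (hp : Function.Injective p)
    (hJ : ∀ j, map (fun x i => MvPolynomial.eval x (f i)) (𝓝 (p j)) = 𝓝 y0) : N ≤ d ^ m := by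
  classical
  -- separating polynomials
  have hg : ∃ g : Fin N → MvPolynomial (Fin m) ℂ,
      ∀ i j, MvPolynomial.eval (p i) (g j) = 0 ↔ i ≠ j := by
    have hk : ∀ i j, ∃ q : MvPolynomial (Fin m) ℂ, i ≠ j →
        MvPolynomial.eval (p i) q = 0 ∧ MvPolynomial.eval (p j) q ≠ 0 := by
      intro i j
      by_cases h : i = j
      · exact ⟨0, fun h' => (h' h).elim⟩
      · obtain ⟨k, hk⟩ := Function.ne_iff.mp (hp.ne h)
        refine ⟨MvPolynomial.X k - MvPolynomial.C (p i k), fun _ => ⟨by simp, ?_⟩⟩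
        simpa [sub_eq_zero] using hk.symm
    choose q hq using hk
    refine ⟨fun j => ∏ i ∈ Finset.univ.erase j, q i j, fun i j => ?_⟩
    rw [map_prod, Finset.prod_eq_zero_iff]
    constructor
    · rintro ⟨k, hk, hk0⟩ rfl
      exact (hq k i (Finset.ne_of_mem_erase hk)).2 hk0
    · intro hij
      exact ⟨i, by simp [hij], (hq i j hij).1⟩
  obtain ⟨g, hg⟩ := hg
  obtain ⟨e, he⟩ : ∃ e, ∀ j, (g j).totalDegree ≤ e :=
    ⟨Finset.univ.sup fun j => (g j).totalDegree, fun j =>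
      Finset.le_sup (f := fun j => (g j).totalDegree) (Finset.mem_univ j)⟩
  -- the key linear independence
  have key : ∀ c : Fin N → MvPolynomial (Fin m) ℂ,
      ∑ j, MvPolynomial.aeval f (c j) * g j = 0 → c = 0 := by
    intro c hc
    have hev : ∀ x : Fin m → ℂ, ∑ j, MvPolynomial.eval (fun i => MvPolynomial.eval x (f i)) (c j) *
        MvPolynomial.eval x (g j) = 0 := by
      intro x
      have := congrArg (MvPolynomial.eval x) hc
      simp only [map_sum, map_mul, map_zero] at this
      rw [← this]
      refine Finset.sum_congr rfl fun j _ => ?_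
      congr 1
      have := MvPolynomial.comp_aeval_apply (R := ℂ) f
        (MvPolynomial.aeval x : MvPolynomial (Fin m) ℂ →ₐ[ℂ] ℂ) (c j)
      simpa [MvPolynomial.aeval_eq_eval] using this.symm
    let M : (Fin N → Fin m → ℂ) → Matrix (Fin N) (Fin N) ℂ :=
      fun X => Matrix.of fun i j => MvPolynomial.eval (X i) (g j)
    have hMc : Continuous fun X => (M X).det := by
      refine Continuous.matrix_det ?_
      refine continuous_matrix fun i j => ?_
      exact (MvPolynomial.continuous_eval (g j)).comp (continuous_apply i)
    have hM0 : (M p).det ≠ 0 := by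
      have : M p = Matrix.diagonal fun i => MvPolynomial.eval (p i) (g i) := by
        ext i j
        by_cases hij : i = j
        · subst hij; simp [M]
        · simp [M, Matrix.diagonal_apply_ne _ hij, (hg i j).2 hij]
      rw [this, Matrix.det_diagonal, Finset.prod_ne_zero_iff]
      intro i _ h
      exact (hg i i).1 h rfl
    have hnb : ∀ᶠ X in 𝓝 p, (M X).det ≠ 0 := hMc.continuousAt.eventually_ne hM0
    rw [nhds_pi] at hnb
    obtain ⟨I, -, t, ht, hts⟩ := Filter.mem_pi.1 hnb
    have hV : (⋂ i, (fun x k => MvPolynomial.eval x (f k)) '' t i) ∈ 𝓝 y0 := by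
      rw [Filter.iInter_mem]
      intro i
      rw [← hJ i]
      exact Filter.image_mem_map (ht i)
    have hc0 : ∀ y ∈ (⋂ i, (fun x k => MvPolynomial.eval x (f k)) '' t i),
        ∀ j, MvPolynomial.eval y (c j) = 0 := by
      intro y hy
      rw [Set.mem_iInter] at hy
      choose X hX hXy using hy
      have hdet : (M X).det ≠ 0 := hts fun i _ => hX i
      have hmul : (M X).mulVec (fun j => MvPolynomial.eval y (c j)) = 0 := by
        funext i
        have := hev (X i)
        have hy' : (fun k => MvPolynomial.eval (X i) (f k)) = y := hXy i
        rw [hy'] at this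
        simp only [Matrix.mulVec, dotProduct, M, Matrix.of_apply, Pi.zero_apply]
        rw [← this]
        exact Finset.sum_congr rfl fun j _ => mul_comm _ _
      exact fun j => congrFun (Matrix.eq_zero_of_mulVec_eq_zero hdet hmul) j
    rw [nhds_pi] at hV
    obtain ⟨I', -, t', ht', hts'⟩ := Filter.mem_pi.1 hV
    funext j
    refine MvPolynomial.funext_set t' (fun i => ?_) fun y hy => ?_
    · exact infinite_of_mem_nhds _ (ht' i)
    · rw [hc0 y (hts' fun i _ => hy i (Set.mem_univ i)) j]
      simp
  refine hp_limit m d N e fun s => ?_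
  let L : (Fin N → MvPolynomial.restrictTotalDegree (Fin m) ℂ s) →ₗ[ℂ]
      MvPolynomial.restrictTotalDegree (Fin m) ℂ (d * s + e) :=
    { toFun := fun c => ⟨∑ j, MvPolynomial.aeval f (c j : MvPolynomial (Fin m) ℂ) * g j, by
        rw [MvPolynomial.mem_restrictTotalDegree]
        refine MvPolynomial.totalDegree_finsetSum_le fun j _ => ?_
        refine (MvPolynomial.totalDegree_mul _ _).trans (add_le_add ?_ (he j))
        exact hp_aeval_degree f hf _ ((MvPolynomial.mem_restrictTotalDegree _ _ _).1 (c j).2)⟩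
      map_add' := by
        intro a b
        ext1
        simp [add_mul, Finset.sum_add_distrib]
      map_smul' := by
        intro a b
        ext1
        simp [Finset.smul_sum] }
  have hL : Function.Injective L := by
    rw [← LinearMap.ker_eq_bot, LinearMap.ker_eq_bot']
    intro c hc
    have := key (fun j => (c j : MvPolynomial (Fin m) ℂ)) (congrArg Subtype.val hc)
    funext j
    exact Subtype.ext (congrFun this j)
  have : ∀ k, Module.Finite ℂ (MvPolynomial.restrictTotalDegree (Fin m) ℂ k) := by
    intro k
    exact Module.finite_of_finrank_pos (by rw [hp_card]; exact Nat.choose_pos (by omega))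
  have := LinearMap.finrank_le_finrank_of_injective hL
  rw [Module.finrank_pi_fintype] at this
  simpa [hp_card] using this

/-- Formal antiderivative of a polynomial (of degree less than `N`). -/
noncomputable def hpA (N : ℕ) (p : Polynomial ℂ) : Polynomial ℂ :=
  ∑ j ∈ Finset.range N, Polynomial.C (p.coeff j / ((j : ℂ) + 1)) * Polynomial.X ^ (j + 1)

lemma hpA_derivative (N : ℕ) (p : Polynomial ℂ) (hp : p.natDegree < N) :
    Polynomial.derivative (hpA N p) = p := by
  conv_rhs => rw [Polynomial.as_sum_range' p N hp]
  rw [hpA, Polynomial.derivative_sum]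
  refine Finset.sum_congr rfl fun j _ => ?_
  have : ((j : ℂ) + 1) ≠ 0 := Nat.cast_add_one_ne_zero j
  rw [Polynomial.derivative_C_mul_X_pow, Polynomial.C_mul_X_pow_eq_monomial]
  simp [div_mul_cancel₀ _ this]

lemma hpA_eval (N : ℕ) (p : Polynomial ℂ) (t : ℂ) :
    (hpA N p).eval t = ∑ j ∈ Finset.range N, p.coeff j / ((j : ℂ) + 1) * t ^ (j + 1) := by
  simp [hpA, Polynomial.eval_finsetSum]

lemma hp_coeff_degree {σ : Type*} {M : ℕ} (W : Fin M → MvPolynomial σ ℂ)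
    (hW : ∀ k, (W k).totalDegree ≤ 1) (s : Finset (Fin M)) :
    ∀ j, (∏ k ∈ s, (Polynomial.X - Polynomial.C (W k))).coeff j = 0 ∨
      ((∏ k ∈ s, (Polynomial.X - Polynomial.C (W k))).coeff j).totalDegree + j ≤ s.card := by
  classical
  induction s using Finset.induction_on with
  | empty =>
    intro j
    rcases Nat.eq_zero_or_pos j with rfl | hj
    · right; simp
    · left; simp [Polynomial.coeff_one, hj.ne']
  | insert a s ha ih =>
    intro j
    rw [Finset.prod_insert ha, Finset.card_insert_of_notMem ha, sub_mul, Polynomial.coeff_sub,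
      Polynomial.coeff_C_mul]
    set p := ∏ k ∈ s, (Polynomial.X - Polynomial.C (W k))
    have h2 : W a * p.coeff j = 0 ∨ (W a * p.coeff j).totalDegree + j ≤ s.card + 1 := by
      rcases ih j with h | h
      · left; rw [h, mul_zero]
      · right
        have := MvPolynomial.totalDegree_mul (W a) (p.coeff j)
        have := hW a
        omega
    have h1 : (Polynomial.X * p).coeff j = 0 ∨
        ((Polynomial.X * p).coeff j).totalDegree + j ≤ s.card + 1 := by
      cases j with
      | zero => left; simp
      | succ j =>
        rw [Polynomial.coeff_X_mul]
        rcases ih j with h | h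
        · exact Or.inl h
        · right; omega
    rcases h1 with h1 | h1 <;> rcases h2 with h2 | h2
    · left; rw [h1, h2, sub_zero]
    · right; rw [h1, zero_sub, MvPolynomial.totalDegree_neg]; exact h2
    · right; rw [h2, sub_zero]; exact h1
    · right
      have := MvPolynomial.totalDegree_sub ((Polynomial.X * p).coeff j) (W a * p.coeff j)
      omega

/-- Logarithmic-derivative type polynomial: minus the variation of `∏ (X - w k)`. -/
noncomputable def hpV {M : ℕ} (s : Finset (Fin M)) (w v : Fin M → ℂ) : Polynomial ℂ :=
  -∑ k ∈ s, Polynomial.C (v k) * ∏ l ∈ s.erase k, (Polynomial.X - Polynomial.C (w l))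

lemma hp_HD {M : ℕ} (w v : Fin M → ℂ) (s : Finset (Fin M)) :
    ∀ j, HasDerivAt (fun ε : ℂ => (∏ k ∈ s, (Polynomial.X - Polynomial.C (w k + ε * v k))).coeff j)
      ((hpV s w v).coeff j) 0 := by
  classical
  induction s using Finset.induction_on with
  | empty => intro j; simpa [hpV] using hasDerivAt_const (0 : ℂ) ((1 : Polynomial ℂ).coeff j)
  | insert a s ha ih =>
    intro j
    have hV : hpV (insert a s) w v = (Polynomial.X - Polynomial.C (w a)) * hpV s w v -
        Polynomial.C (v a) * ∏ k ∈ s, (Polynomial.X - Polynomial.C (w k)) := by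
      rw [hpV, Finset.sum_insert ha, Finset.erase_insert ha, hpV, mul_neg, Finset.mul_sum,
        neg_add, add_comm, sub_eq_add_neg]
      congr 2
      refine Finset.sum_congr rfl fun k hk => ?_
      have hka : a ≠ k := fun h => ha (h ▸ hk)
      rw [Finset.erase_insert_of_ne hka, Finset.prod_insert (fun h => ha (Finset.mem_of_mem_erase h))]
      ring
    have hfun : (fun ε : ℂ =>
        (∏ k ∈ insert a s, (Polynomial.X - Polynomial.C (w k + ε * v k))).coeff j) =
        fun ε : ℂ => (Polynomial.X * ∏ k ∈ s, (Polynomial.X - Polynomial.C (w k + ε * v k))).coeff j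
          - (w a + ε * v a) * (∏ k ∈ s, (Polynomial.X - Polynomial.C (w k + ε * v k))).coeff j := by
      funext ε
      rw [Finset.prod_insert ha, sub_mul, Polynomial.coeff_sub, Polynomial.coeff_C_mul]
    rw [hfun, hV, sub_mul, Polynomial.coeff_sub, Polynomial.coeff_sub, Polynomial.coeff_C_mul,
      Polynomial.coeff_C_mul, sub_sub]
    refine HasDerivAt.sub ?_ ?_
    · cases j with
      | zero => simpa using hasDerivAt_const (0 : ℂ) (0 : ℂ)
      | succ j => simpa only [Polynomial.coeff_X_mul] using ih j
    · have h1 : HasDerivAt (fun ε : ℂ => w a + ε * v a) (v a) 0 := by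
        simpa using ((hasDerivAt_id (0 : ℂ)).mul_const (v a)).const_add (w a)
      have h2 := h1.mul (ih j)
      simp only [zero_mul, add_zero] at h2
      rw [add_comm]
      exact h2

lemma hp_dir {m : ℕ} (N : ℕ) (w v : Fin (m+1) → ℂ) (hN : m + 1 < N) (k : Fin (m+1)) :
    HasDerivAt (fun ε : ℂ => (hpA N (∏ l, (Polynomial.X - Polynomial.C (w l + ε * v l)))).eval
      (w k + ε * v k)) ((hpA N (hpV Finset.univ w v)).eval (w k)) 0 := by
  classical
  set P : Polynomial ℂ := ∏ l, (Polynomial.X - Polynomial.C (w l)) with hP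
  have hP0 : P.eval (w k) = 0 := by
    rw [hP, Polynomial.eval_prod]
    exact Finset.prod_eq_zero (Finset.mem_univ k) (by simp)
  have hPN : P.natDegree < N := by
    rw [hP, Polynomial.natDegree_finsetProd_X_sub_C_eq_card]; simpa using hN
  have hval : (hpA N (hpV Finset.univ w v)).eval (w k) = ∑ j ∈ Finset.range N,
      ((hpV Finset.univ w v).coeff j / ((j : ℂ) + 1) * w k ^ (j + 1) +
        P.coeff j / ((j : ℂ) + 1) * (((j + 1 : ℕ) : ℂ) * w k ^ j * v k)) := by
    rw [Finset.sum_add_distrib, ← hpA_eval]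
    have : ∑ j ∈ Finset.range N, P.coeff j / ((j : ℂ) + 1) * (((j + 1 : ℕ) : ℂ) * w k ^ j * v k) =
        P.eval (w k) * v k := by
      rw [Polynomial.eval_eq_sum_range' hPN, Finset.sum_mul]
      refine Finset.sum_congr rfl fun j _ => ?_
      have : ((j : ℂ) + 1) ≠ 0 := Nat.cast_add_one_ne_zero j
      push_cast
      field_simp
    rw [this, hP0]; ring
  rw [hval]
  simp only [hpA_eval]
  refine HasDerivAt.fun_sum fun j _ => ?_
  have h1 : HasDerivAt (fun ε : ℂ => w k + ε * v k) (v k) 0 := by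
    simpa using ((hasDerivAt_id (0 : ℂ)).mul_const (v k)).const_add (w k)
  have h2 := ((hp_HD w v Finset.univ j).div_const ((j : ℂ) + 1)).fun_mul (h1.fun_pow (j+1))
  simpa [hP] using h2

lemma hp_inj {m : ℕ} (N : ℕ) (w v : Fin (m+1) → ℂ) (hN : m + 1 < N) (hw : Function.Injective w)
    (hv : ∑ k, v k = 0)
    (h : ∀ k, (hpA N (hpV Finset.univ w v)).eval (w k) =
      (hpA N (hpV Finset.univ w v)).eval (w (Fin.last m))) : v = 0 := by
  classical
  set V := hpV Finset.univ w v with hV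
  have hmon : ∀ k, (∏ l ∈ Finset.univ.erase k, (Polynomial.X - Polynomial.C (w l))).natDegree = m := by
    intro k
    rw [Polynomial.natDegree_finsetProd_X_sub_C_eq_card]; simp
  have hdeg : V.natDegree ≤ m := by
    rw [hV, hpV, Polynomial.natDegree_neg]
    refine Polynomial.natDegree_sum_le_of_forall_le _ _ fun k _ => ?_
    exact (Polynomial.natDegree_C_mul_le _ _).trans (hmon k).le
  have hcm : V.coeff m = 0 := by
    rw [hV, hpV, Polynomial.coeff_neg, Polynomial.finsetSum_coeff]
    simp only [Polynomial.coeff_C_mul]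
    rw [neg_eq_zero, ← hv]
    refine Finset.sum_congr rfl fun k _ => ?_
    have := Polynomial.monic_prod_X_sub_C w (Finset.univ.erase k)
    rw [Polynomial.Monic, Polynomial.leadingCoeff, hmon k] at this
    rw [this, mul_one]
  have hcj : ∀ j, m ≤ j → V.coeff j = 0 := by
    intro j hj
    rcases hj.eq_or_lt with rfl | hj
    · exact hcm
    · exact Polynomial.coeff_eq_zero_of_natDegree_lt (lt_of_le_of_lt hdeg hj)
  have hG : (hpA N V).natDegree ≤ m := by
    refine Polynomial.natDegree_sum_le_of_forall_le _ _ fun j _ => ?_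
    by_cases hj : m ≤ j
    · simp [hcj j hj]
    · exact (Polynomial.natDegree_C_mul_X_pow_le _ _).trans (by omega)
  have hz : hpA N V - Polynomial.C ((hpA N V).eval (w (Fin.last m))) = 0 := by
    refine Polynomial.eq_zero_of_natDegree_lt_card_of_eval_eq_zero _ hw (fun k => ?_) ?_
    · simp [h k]
    · rw [Polynomial.natDegree_sub_C]; simpa using Nat.lt_succ_of_le hG
  have hV0 : V = 0 := by
    have := congrArg Polynomial.derivative hz
    simpa [hpA_derivative N V (by omega)] using this
  funext k
  have := congrArg (Polynomial.eval (w k)) hV0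
  rw [hV, hpV, Polynomial.eval_neg, Polynomial.eval_finsetSum, Polynomial.eval_zero, neg_eq_zero,
    Finset.sum_eq_single k] at this
  · rw [Polynomial.eval_mul, Polynomial.eval_C, Polynomial.eval_prod] at this
    rcases mul_eq_zero.1 this with h0 | h0
    · exact h0
    · exfalso
      obtain ⟨l, hl, hl0⟩ := Finset.prod_eq_zero_iff.1 h0
      simp only [Polynomial.eval_sub, Polynomial.eval_X, Polynomial.eval_C, sub_eq_zero] at hl0
      exact Finset.ne_of_mem_erase hl (hw hl0).symm
  · intro l _ hlk
    rw [Polynomial.eval_mul, Polynomial.eval_prod]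
    refine mul_eq_zero_of_right _ (Finset.prod_eq_zero (i := k) ?_ (by simp))
    simp [hlk.symm]
  · simp

lemma hp_finset_bound {α : Type*} (Z : Set α) (B : ℕ)
    (h : ∀ t : Finset α, (t : Set α) ⊆ Z → t.card ≤ B) : Z.Finite ∧ Z.ncard ≤ B := by
  have hf : Z.Finite := by
    by_contra hinf
    obtain ⟨t, ht, hc⟩ := Set.Infinite.exists_subset_card_eq hinf (B + 1)
    have := h t ht
    omega
  refine ⟨hf, ?_⟩
  rw [Set.ncard_eq_toFinset_card Z hf]
  exact h _ (by simp)

/-- Append to a tuple the entry which makes the sum zero. -/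
def hpS {A : Type*} [AddCommGroup A] {m : ℕ} (x : Fin m → A) : Fin (m+1) → A :=
  Fin.snoc (α := fun _ => A) x (-∑ i, x i)

lemma hpS_castSucc {A : Type*} [AddCommGroup A] {m : ℕ} (x : Fin m → A) (i : Fin m) :
    hpS x i.castSucc = x i := by simp [hpS]

lemma hpS_last {A : Type*} [AddCommGroup A] {m : ℕ} (x : Fin m → A) :
    hpS x (Fin.last m) = -∑ i, x i := by simp [hpS]

lemma hpS_sum {A : Type*} [AddCommGroup A] {m : ℕ} (x : Fin m → A) : ∑ k, hpS x k = 0 := by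
  rw [Fin.sum_univ_castSucc]; simp [hpS_castSucc, hpS_last]

lemma hpS_init {A : Type*} [AddCommGroup A] {m : ℕ} (w : Fin (m+1) → A) (hw : ∑ k, w k = 0) :
    hpS (fun i : Fin m => w i.castSucc) = w := by
  funext k
  rw [Fin.sum_univ_castSucc] at hw
  induction k using Fin.lastCases with
  | last => rw [hpS_last]; exact (eq_neg_of_add_eq_zero_right hw).symm
  | cast i => rw [hpS_castSucc]

/-- The monic polynomial with roots `w`. -/
noncomputable def hpP {A : Type*} [CommRing A] {M : ℕ} (w : Fin M → A) : Polynomial A :=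
  ∏ l, (Polynomial.X - Polynomial.C (w l))

/-- Polynomial version of the value of the antiderivative at the critical point `W k`. -/
noncomputable def hpH {m : ℕ} (k : Fin (m+1)) : MvPolynomial (Fin m) ℂ :=
  ∑ j ∈ Finset.range (m+2), MvPolynomial.C (1 / ((j : ℂ) + 1)) *
    ((hpP (hpS (MvPolynomial.X : Fin m → MvPolynomial (Fin m) ℂ))).coeff j *
      hpS (MvPolynomial.X : Fin m → MvPolynomial (Fin m) ℂ) k ^ (j+1))

lemma hpS_degree {m : ℕ} (k : Fin (m+1)) :
    (hpS (MvPolynomial.X : Fin m → MvPolynomial (Fin m) ℂ) k).totalDegree ≤ 1 := by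
  induction k using Fin.lastCases with
  | last =>
    rw [hpS_last, MvPolynomial.totalDegree_neg]
    exact MvPolynomial.totalDegree_finsetSum_le fun i _ => by simp
  | cast i => rw [hpS_castSucc]; simp

lemma hpH_degree {m : ℕ} (k : Fin (m+1)) : (hpH k).totalDegree ≤ m + 2 := by
  refine MvPolynomial.totalDegree_finsetSum_le fun j hj => ?_
  rcases hp_coeff_degree (hpS (MvPolynomial.X : Fin m → MvPolynomial (Fin m) ℂ)) hpS_degree
    Finset.univ j with h | h
  · rw [hpP, h]; simp
  · refine (MvPolynomial.totalDegree_mul _ _).trans ?_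
    rw [MvPolynomial.totalDegree_C, zero_add]
    refine (MvPolynomial.totalDegree_mul _ _).trans ?_
    have h2 := MvPolynomial.totalDegree_pow
      (hpS (MvPolynomial.X : Fin m → MvPolynomial (Fin m) ℂ) k) (j+1)
    have h3 := Nat.mul_le_mul_left (j+1) (hpS_degree (m := m) k)
    rw [Finset.card_univ, Fintype.card_fin] at h
    rw [hpP]
    omega

lemma hpS_eval {m : ℕ} (x : Fin m → ℂ) (k : Fin (m+1)) :
    MvPolynomial.eval x (hpS (MvPolynomial.X : Fin m → MvPolynomial (Fin m) ℂ) k) = hpS x k := by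
  induction k using Fin.lastCases with
  | last => simp [hpS_last]
  | cast i => simp [hpS_castSucc]

lemma hpH_eval {m : ℕ} (x : Fin m → ℂ) (k : Fin (m+1)) :
    MvPolynomial.eval x (hpH k) = (hpA (m+2) (hpP (hpS x))).eval (hpS x k) := by
  have hc : ∀ j, MvPolynomial.eval x
      ((hpP (hpS (MvPolynomial.X : Fin m → MvPolynomial (Fin m) ℂ))).coeff j) =
      (hpP (hpS x)).coeff j := by
    intro j
    rw [← Polynomial.coeff_map, hpP, hpP, Polynomial.map_prod]
    simp [hpS_eval]
  rw [hpH, hpA_eval, map_sum]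
  refine Finset.sum_congr rfl fun j _ => ?_
  rw [map_mul, map_mul, map_pow, hc, hpS_eval, MvPolynomial.eval_C]
  ring

lemma hp_map_nhds {m : ℕ} (x : Fin m → ℂ) (hx : Function.Injective (hpS x)) :
    map (fun x (i : Fin m) => MvPolynomial.eval x (hpH i.castSucc - hpH (Fin.last m))) (𝓝 x) =
      𝓝 (fun i : Fin m => MvPolynomial.eval x (hpH i.castSucc - hpH (Fin.last m))) := by
  set F : (Fin m → ℂ) → (Fin m → ℂ) :=
    fun x (i : Fin m) => MvPolynomial.eval x (hpH i.castSucc - hpH (Fin.last m)) with hF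
  have hcd : ContDiffAt ℂ 1 F x := by
    rw [contDiffAt_pi]
    intro i
    exact (AnalyticOnNhd.eval_mvPolynomial _ x (Set.mem_univ x)).contDiffAt
  have hs : HasStrictFDerivAt F (fderiv ℂ F x) x := hcd.hasStrictFDerivAt (by simp)
  refine hs.map_nhds_eq_of_surj ?_
  have hinj : Function.Injective (fderiv ℂ F x).toLinearMap := by
    rw [← LinearMap.ker_eq_bot, LinearMap.ker_eq_bot']
    intro ξ hξ
    have hline : HasDerivAt (fun ε : ℂ => x + ε • ξ) ξ 0 := by
      simpa using ((hasDerivAt_id (0 : ℂ)).smul_const ξ).const_add x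
    have hd : HasDerivAt (fun ε : ℂ => F (x + ε • ξ)) (fderiv ℂ F x ξ) 0 := by
      have h0 : HasFDerivAt F (fderiv ℂ F x) (x + (0 : ℂ) • ξ) := by
        simpa using hs.hasFDerivAt
      exact h0.comp_hasDerivAt (0 : ℂ) hline
    have hξ' : fderiv ℂ F x ξ = 0 := hξ
    rw [hξ', hasDerivAt_pi] at hd
    have hlin : ∀ ε : ℂ, hpS (x + ε • ξ) = fun l => hpS x l + ε * hpS ξ l := by
      intro ε
      funext l
      induction l using Fin.lastCases with
      | last => simp [hpS_last, Finset.sum_add_distrib, Finset.mul_sum]; ring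
      | cast i => simp [hpS_castSucc]
    have hz : hpS ξ = 0 := by
      refine hp_inj (m+2) (hpS x) (hpS ξ) (by omega) hx (hpS_sum ξ) fun k => ?_
      induction k using Fin.lastCases with
      | last => rfl
      | cast i =>
        have h1 := hp_dir (m+2) (hpS x) (hpS ξ) (by omega) i.castSucc
        have h2 := hp_dir (m+2) (hpS x) (hpS ξ) (by omega) (Fin.last m)
        have h3 := h1.fun_sub h2
        have h4 := hd i
        simp only [hF, map_sub, hpH_eval, hlin, hpP] at h4
        exact sub_eq_zero.1 (h3.unique h4)
    funext i
    have := congrFun hz i.castSucc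
    rwa [hpS_castSucc] at this
  exact LinearMap.range_eq_top.2 (LinearMap.injective_iff_surjective.1 hinj)

/-- Bound on the number of centred critical-point configurations. -/
lemma hp_fiber {m : ℕ} (y : Fin (m+1) → ℂ) :
    let Z : Set (Fin (m+1) → ℂ) := {w | Function.Injective w ∧ ∑ k, w k = 0 ∧
      ∀ k, (hpA (m+2) (hpP w)).eval (w k) - (hpA (m+2) (hpP w)).eval (w (Fin.last m)) = y k}
    Z.Finite ∧ Z.ncard ≤ (m+2) ^ m := by
  intro Z
  refine hp_finset_bound Z _ fun t ht => ?_
  let p : Fin t.card → Fin m → ℂ := fun a i => (t.equivFin.symm a : Fin (m+1) → ℂ) i.castSucc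
  have hpw : ∀ a, hpS (p a) = (t.equivFin.symm a : Fin (m+1) → ℂ) := fun a =>
    hpS_init _ (ht (t.equivFin.symm a).2).2.1
  refine hp_bezout (d := m + 2) (fun i : Fin m => hpH i.castSucc - hpH (Fin.last m)) (fun i => ?_)
    (fun i => y i.castSucc) p ?_ ?_
  · refine (MvPolynomial.totalDegree_sub _ _).trans (max_le (hpH_degree _) (hpH_degree _))
  · intro a b hab
    have := congrArg hpS hab
    rw [hpw, hpw] at this
    exact t.equivFin.symm.injective (Subtype.ext this)
  · intro a
    have hm := ht (t.equivFin.symm a).2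
    rw [hp_map_nhds (p a) (by rw [hpw]; exact hm.1)]
    congr 1
    funext i
    rw [map_sub, hpH_eval, hpH_eval, hpw]
    exact hm.2.2 i.castSucc

lemma hpP_eval {M : ℕ} (w : Fin M → ℂ) (t : ℂ) : (hpP w).eval t = ∏ l, (t - w l) := by
  simp [hpP, Polynomial.eval_prod]

lemma hpP_isRoot {M : ℕ} (w : Fin M → ℂ) (t : ℂ) : (hpP w).eval t = 0 ↔ ∃ l, t = w l := by
  simp [hpP_eval, Finset.prod_eq_zero_iff, sub_eq_zero]

lemma hpP_perm {M : ℕ} (a b : Fin M → ℂ) (hb : Function.Injective b) (h : hpP a = hpP b) :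
    ∃ π : Equiv.Perm (Fin M), ∀ i, b i = a (π i) := by
  have : ∀ i, ∃ j, b i = a j := fun i => by
    rw [← hpP_isRoot, h, hpP_isRoot]; exact ⟨i, rfl⟩
  choose π hπ using this
  have hinj : Function.Injective π := fun i j hij => hb (by rw [hπ i, hπ j, hij])
  exact ⟨Equiv.ofBijective π (Finite.injective_iff_bijective.1 hinj), hπ⟩

lemma hpP_comp_perm {M : ℕ} (a : Fin M → ℂ) (π : Equiv.Perm (Fin M)) :
    hpP (fun i => a (π i)) = hpP a :=
  Equiv.prod_comp π (fun l => Polynomial.X - Polynomial.C (a l))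

lemma hpP_monic {M : ℕ} (w : Fin M → ℂ) : (hpP w).Monic := Polynomial.monic_prod_X_sub_C w _

lemma hpP_natDegree {M : ℕ} (w : Fin M → ℂ) : (hpP w).natDegree = M := by
  rw [hpP, Polynomial.natDegree_finsetProd_X_sub_C_eq_card]; simp

lemma hpP_scale {M : ℕ} (w : Fin M → ℂ) (ω : ℂ) (hω : ω ≠ 0) :
    (hpP w).comp (Polynomial.C ω⁻¹ * Polynomial.X) =
      Polynomial.C (ω⁻¹ ^ M) * hpP (fun i => ω * w i) := by
  refine Polynomial.funext fun t => ?_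
  simp only [Polynomial.eval_comp, hpP_eval, Polynomial.eval_mul, Polynomial.eval_C,
    Polynomial.eval_X]
  rw [show ω⁻¹ ^ M = ∏ _l : Fin M, ω⁻¹ by simp, ← Finset.prod_mul_distrib]
  refine Finset.prod_congr rfl fun l _ => ?_
  field_simp

lemma hpP_shift {M : ℕ} (w : Fin M → ℂ) (c : ℂ) :
    (hpP w).comp (Polynomial.X + Polynomial.C c) = hpP (fun i => w i - c) := by
  refine Polynomial.funext fun t => ?_
  simp only [Polynomial.eval_comp, hpP_eval, Polynomial.eval_add, Polynomial.eval_C,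
    Polynomial.eval_X]
  exact Finset.prod_congr rfl fun l _ => by ring

/-- The solution set for labelled critical values `r`. -/
def hpSet (m : ℕ) (r : Fin (m+1) → ℂ) : Set (Fin (m+2) → ℂ) :=
  {l | Function.Injective l ∧ ∏ i, l i = 1 ∧ ∃ u : Fin (m+1) → ℂ, Function.Injective u ∧
    Polynomial.derivative (hpP l) = Polynomial.C ((m : ℂ) + 2) * hpP u ∧
    ∀ k, (hpP l).eval (u k) = r k}

/-- The polynomial with centred critical points `w` and last critical value `r`. -/
noncomputable def hpB {m : ℕ} (r : Fin (m+1) → ℂ) (w : Fin (m+1) → ℂ) : Polynomial ℂ :=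
  Polynomial.C ((m : ℂ) + 2) * hpA (m+2) (hpP w) +
    Polynomial.C (r (Fin.last m) - ((m : ℂ) + 2) * (hpA (m+2) (hpP w)).eval (w (Fin.last m)))

lemma hp_two_ne (m : ℕ) : ((m : ℂ) + 2) ≠ 0 := by exact_mod_cast (by omega : m + 2 ≠ 0)

lemma hpB_derivative {m : ℕ} (r w : Fin (m+1) → ℂ) :
    Polynomial.derivative (hpB r w) = Polynomial.C ((m : ℂ) + 2) * hpP w := by
  rw [hpB, Polynomial.derivative_add, Polynomial.derivative_C, Polynomial.derivative_C_mul,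
    hpA_derivative _ _ (by rw [hpP_natDegree]; omega), add_zero]

lemma hpA_natDegree (N : ℕ) (p : Polynomial ℂ) : (hpA N p).natDegree ≤ N := by
  refine Polynomial.natDegree_sum_le_of_forall_le _ _ fun j hj => ?_
  exact (Polynomial.natDegree_C_mul_X_pow_le _ _).trans (Finset.mem_range.1 hj)

lemma hp_eq_of_derivative (p q : Polynomial ℂ)
    (h : Polynomial.derivative p = Polynomial.derivative q) (t : ℂ) (ht : p.eval t = q.eval t) :
    p = q := by
  have h0 : Polynomial.derivative (p - q) = 0 := by rw [Polynomial.derivative_sub, h, sub_self]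
  have h1 := Polynomial.eq_C_of_derivative_eq_zero h0
  have h2 := congrArg (Polynomial.eval t) h1
  rw [Polynomial.eval_sub, ht, sub_self, Polynomial.eval_C] at h2
  rw [← h2, Polynomial.C_0] at h1
  exact sub_eq_zero.1 h1

/-- Count of the polynomials `Q`. -/
lemma hp_count (m : ℕ) (r : Fin (m+1) → ℂ) :
    ∃ T : Finset (Polynomial ℂ), T.card ≤ (m+2) * (m+2) ^ m ∧ ∀ l ∈ hpSet m r, hpP l ∈ T := by
  classical
  obtain ⟨hZf, hZc⟩ := hp_fiber (m := m) (fun k => (r k - r (Fin.last m)) / ((m : ℂ) + 2))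
  set Z : Set (Fin (m+1) → ℂ) := {w | Function.Injective w ∧ ∑ k, w k = 0 ∧
      ∀ k, (hpA (m+2) (hpP w)).eval (w k) - (hpA (m+2) (hpP w)).eval (w (Fin.last m)) =
        (r k - r (Fin.last m)) / ((m : ℂ) + 2)} with hZ
  have hm2 := hp_two_ne m
  refine ⟨hZf.toFinset.biUnion fun w =>
    (hpB r w - Polynomial.C ((-1) ^ (m+2))).roots.toFinset.image
      fun c => (hpB r w).comp (Polynomial.X + Polynomial.C c), ?_, ?_⟩
  · refine Finset.card_biUnion_le.trans ?_
    refine (Finset.sum_le_card_nsmul _ _ (m+2) fun w _ => ?_).trans ?_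
    · refine Finset.card_image_le.trans ((Multiset.toFinset_card_le _).trans ?_)
      refine (Polynomial.card_roots' _).trans ?_
      rw [Polynomial.natDegree_sub_C, hpB, Polynomial.natDegree_add_C]
      exact (Polynomial.natDegree_C_mul_le _ _).trans (hpA_natDegree _ _)
    · rw [smul_eq_mul, mul_comm, ← Set.ncard_eq_toFinset_card Z hZf]
      exact Nat.mul_le_mul_left _ hZc
  · rintro l ⟨hl, hprod, u, hu, hder, hval⟩
    set c : ℂ := (∑ k, u k) / ((m : ℂ) + 1) with hc
    have hm1 : ((m : ℂ) + 1) ≠ 0 := Nat.cast_add_one_ne_zero m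
    set w : Fin (m+1) → ℂ := fun k => u k - c with hw
    have hB : (hpP l).comp (Polynomial.X + Polynomial.C c) = hpB r w := by
      refine hp_eq_of_derivative _ _ ?_ (w (Fin.last m)) ?_
      · rw [Polynomial.derivative_comp, hder, hpB_derivative]
        simp only [Polynomial.mul_comp, Polynomial.C_comp, hpP_shift]
        simp [hw]
      · simp [hpB, hw, Polynomial.eval_comp, hval]
    have hQ : hpP l = (hpB r w).comp (Polynomial.X + Polynomial.C (-c)) := by
      rw [← hB, Polynomial.comp_assoc]; simp
    have hwZ : w ∈ Z := by
      refine ⟨fun a b hab => hu (sub_left_injective hab), ?_, fun k => ?_⟩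
      · simp only [hw, Finset.sum_sub_distrib, Finset.sum_const, Finset.card_univ,
          Fintype.card_fin, nsmul_eq_mul, hc]
        push_cast
        field_simp
        ring
      · have h1 : (hpB r w).eval (w k) = r k := by
          rw [← hB]; simp [hw, Polynomial.eval_comp, hval]
        rw [eq_div_iff hm2, ← h1]
        simp [hpB]
        ring
    rw [Finset.mem_biUnion]
    refine ⟨w, hZf.mem_toFinset.2 hwZ, Finset.mem_image.2 ⟨-c, ?_, hQ.symm⟩⟩
    rw [Multiset.mem_toFinset, Polynomial.mem_roots]
    · have h0 := congrArg (Polynomial.eval 0) hQ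
      rw [hpP_eval] at h0
      simp only [zero_sub, Finset.prod_neg, hprod, Polynomial.eval_comp, Polynomial.eval_add,
        Polynomial.eval_X, Polynomial.eval_C, zero_add, Finset.card_univ, Fintype.card_fin,
        mul_one] at h0
      simp [Polynomial.IsRoot, ← h0]
    · intro h0
      have := congrArg Polynomial.derivative h0
      rw [Polynomial.derivative_sub, hpB_derivative] at this
      simp only [Polynomial.derivative_zero, Polynomial.derivative_C, sub_zero, mul_eq_zero,
        Polynomial.C_eq_zero] at this
      rcases this with h | h
      · exact hm2 h
      · exact (hpP_monic w).ne_zero h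

lemma hp_finite (m : ℕ) (r : Fin (m+1) → ℂ) : (hpSet m r).Finite := by
  obtain ⟨T, -, hT⟩ := hp_count m r
  refine Set.Finite.subset (Set.Finite.preimage' (f := hpP (A := ℂ) (M := m+2)) T.finite_toSet ?_) hT
  intro q _
  by_cases hq : q = 0
  · refine Set.Finite.subset Set.finite_empty fun l hl => ?_
    exact (hpP_monic l).ne_zero (hl.trans hq)
  · refine Set.Finite.subset (Set.Finite.pi' (fun _ : Fin (m+2) => q.roots.toFinset.finite_toSet))
      fun l hl i => ?_
    have hl' : hpP l = q := hl
    simp only [Finset.mem_coe, Multiset.mem_toFinset, Polynomial.mem_roots hq, Polynomial.IsRoot]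
    rw [← hl', hpP_isRoot]
    exact ⟨i, rfl⟩

lemma hpSet_smul (m : ℕ) (r : Fin (m+1) → ℂ) (l) (hl : l ∈ hpSet m r) (ω : ℂ)
    (hω : ω ^ (m+2) = 1) : (fun i => ω * l i) ∈ hpSet m r ∧
      hpP (fun i => ω * l i) = (hpP l).comp (Polynomial.C ω⁻¹ * Polynomial.X) := by
  have hω0 : ω ≠ 0 := by rintro rfl; simp at hω
  obtain ⟨hl, hprod, u, hu, hder, hval⟩ := hl
  have hs : hpP (fun i => ω * l i) = (hpP l).comp (Polynomial.C ω⁻¹ * Polynomial.X) := by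
    rw [hpP_scale _ _ hω0, inv_pow, hω]; simp
  refine ⟨⟨fun a b hab => hl (mul_left_cancel₀ hω0 hab), ?_, fun k => ω * u k,
    fun a b hab => hu (mul_left_cancel₀ hω0 hab), ?_, fun k => ?_⟩, hs⟩
  · rw [Finset.prod_mul_distrib, hprod]; simp [hω]
  · rw [hs, Polynomial.derivative_comp, hder]
    simp only [Polynomial.mul_comp, Polynomial.C_comp, hpP_scale _ _ hω0]
    have : ω⁻¹ * ω⁻¹ ^ (m+1) = 1 := by rw [← pow_succ', inv_pow, hω, inv_one]
    calc _ = Polynomial.C (ω⁻¹ * ω⁻¹ ^ (m+1)) *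
          (Polynomial.C ((m : ℂ) + 2) * hpP (fun i => ω * u i)) := by
          simp only [Polynomial.derivative_mul, Polynomial.derivative_C, Polynomial.derivative_X,
            map_mul]
          ring
      _ = _ := by rw [this]; simp
  · rw [hs]
    simp [Polynomial.eval_comp, hω0, hval]

lemma hp_free (m : ℕ) (r : Fin (m+2) → ℂ) (hr : Function.Injective r) (l) (hl : l ∈ hpSet (m+1) r)
    (a b : ℂ) (ha : a ≠ 0) (hb : b ≠ 0)
    (h : (hpP l).comp (Polynomial.C a * Polynomial.X) =
      (hpP l).comp (Polynomial.C b * Polynomial.X)) : a = b := by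
  obtain ⟨hl, hprod, u, hu, hder, hval⟩ := hl
  have hk : ∃ k, u k ≠ 0 := by
    by_contra hcon
    push Not at hcon
    have : (0 : Fin (m+2)) = 1 := hu (by rw [hcon, hcon])
    simp at this
  obtain ⟨k, hk⟩ := hk
  have hm2 := hp_two_ne (m+1)
  have h1 := congrArg (fun q => Polynomial.eval (u k / a) q) h
  have h2 := congrArg (fun q => Polynomial.eval (u k / a) (Polynomial.derivative q)) h
  simp only [Polynomial.derivative_comp, hder, Polynomial.eval_comp, Polynomial.eval_mul,
    Polynomial.eval_C, Polynomial.eval_X, mul_div_cancel₀ _ ha, hval, Polynomial.derivative_mul,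
    Polynomial.derivative_C, Polynomial.derivative_X, zero_mul, zero_add, mul_one] at h1 h2
  rw [(hpP_isRoot u (u k)).2 ⟨k, rfl⟩, mul_zero, mul_zero] at h2
  have h3 : (hpP u).eval (b * (u k / a)) = 0 := by
    rcases mul_eq_zero.1 h2.symm with h | h
    · exact (hb h).elim
    · exact (mul_eq_zero.1 h).resolve_left hm2
  obtain ⟨k', hk'⟩ := (hpP_isRoot u _).1 h3
  rw [hk', hval] at h1
  rw [← hr h1] at hk'
  field_simp at hk'
  exact hk'.symm

/-- The equivalence relation. -/
def hpRel (m : ℕ) (x y : Fin (m+2) → ℂ) : Prop :=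
  ∃ ω : ℂ, ω ^ (m+2) = 1 ∧ ∃ π : Equiv.Perm (Fin (m+2)), ∀ i, y i = ω * x (π i)

/-- The setoid on a set of tuples. -/
def hpSetoid (m : ℕ) (S : Set (Fin (m+2) → ℂ)) : Setoid S where
  r x y := hpRel m x y
  iseqv := by
    refine ⟨fun x => ⟨1, by simp, 1, by simp⟩, ?_, ?_⟩
    · rintro x y ⟨ω, hω, π, h⟩
      have hω0 : ω ≠ 0 := by rintro rfl; simp at hω
      exact ⟨ω⁻¹, by rw [inv_pow, hω, inv_one], π⁻¹, fun i => by rw [h]; simp [hω0]⟩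
    · rintro x y z ⟨ω, hω, π, h⟩ ⟨ω', hω', π', h'⟩
      exact ⟨ω' * ω, by rw [mul_pow, hω, hω', one_mul], π * π', fun i => by
        rw [h', h, mul_assoc]; rfl⟩

lemma hp_two (r : Fin 1 → ℂ) (x y : Fin 2 → ℂ) (hx : x ∈ hpSet 0 r) (hy : y ∈ hpSet 0 r) :
    hpRel 0 x y := by
  have key : ∀ l ∈ hpSet 0 r, l 0 * l 1 = 1 ∧ (l 0 + l 1) ^ 2 = 4 * (1 - r 0) := by
    rintro l ⟨hl, hprod, u, hu, hder, hval⟩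
    have h1 : l 0 * l 1 = 1 := by simpa using hprod
    have h2 := congrArg (Polynomial.eval 0) hder
    have h3 := hval 0
    simp [hpP] at h2 h3
    refine ⟨h1, ?_⟩
    have h4 : l 0 + l 1 = 2 * u 0 := by linear_combination -h2
    rw [← h3]
    linear_combination (l 0 + l 1 - 2 * u 0) * h4 + 4 * h1
  obtain ⟨hx1, hx2⟩ := key x hx
  obtain ⟨hy1, hy2⟩ := key y hy
  have : ∃ ω : ℂ, ω ^ 2 = 1 ∧ y 0 + y 1 = ω * (x 0 + x 1) := by
    rcases sq_eq_sq_iff_eq_or_eq_neg.1 (hy2.trans hx2.symm) with h | h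
    · exact ⟨1, by simp, by rw [h, one_mul]⟩
    · exact ⟨-1, by simp, by rw [h]; ring⟩
  obtain ⟨ω, hω, hs⟩ := this
  refine ⟨ω, hω, hpP_perm (fun i => ω * x i) y hy.1 ?_⟩
  refine Polynomial.funext fun t => ?_
  simp only [hpP_eval, Fin.prod_univ_two]
  linear_combination t * hs + ω ^ 2 * hx1 - hy1 + hω

lemma hp_classes (m : ℕ) (r : Fin (m+1) → ℂ) (hr : Function.Injective r) :
    Nat.card (Quotient (hpSetoid m (hpSet m r))) ≤ (m+2) ^ m := by
  classical
  have := (hp_finite m r).to_subtype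
  cases m with
  | zero =>
    rw [pow_zero, Finite.card_le_one_iff_subsingleton]
    refine ⟨fun a b => ?_⟩
    induction a using Quotient.inductionOn with | _ a
    induction b using Quotient.inductionOn with | _ b
    exact Quotient.sound (hp_two r a b a.2 b.2)
  | succ m =>
    obtain ⟨T, hTc, hT⟩ := hp_count (m+1) r
    let U := Polynomial.nthRootsFinset (m+1+2) (1 : ℂ)
    have hU : U.card = m+1+2 :=
      (Complex.isPrimitiveRoot_exp (m+1+2) (by omega)).card_nthRootsFinset
    have hUm : ∀ ω : U, (ω : ℂ) ^ (m+1+2) = 1 := fun ω =>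
      (Polynomial.mem_nthRootsFinset (by omega) 1).1 ω.2
    have hU0 : ∀ ω : U, (ω : ℂ) ≠ 0 := fun ω h => by
      have := hUm ω; rw [h] at this; simp at this
    let φ : Quotient (hpSetoid (m+1) (hpSet (m+1) r)) × U → T := fun z =>
      ⟨hpP (fun i => (z.2 : ℂ) * (z.1.out : Fin (m+1+2) → ℂ) i),
        hT _ (hpSet_smul (m+1) r _ z.1.out.2 _ (hUm z.2)).1⟩
    have hφ : Function.Injective φ := by
      rintro ⟨a, ω⟩ ⟨b, ω'⟩ h
      have h : hpP (fun i => (ω : ℂ) * (a.out : Fin (m+1+2) → ℂ) i) =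
        hpP (fun i => (ω' : ℂ) * (b.out : Fin (m+1+2) → ℂ) i) := congrArg Subtype.val h
      have hab : a = b := by
        rw [← Quotient.out_eq a, ← Quotient.out_eq b]
        obtain ⟨π, hπ⟩ := hpP_perm _ _
          (fun i j hij => b.out.2.1 (mul_left_cancel₀ (hU0 ω') hij)) h
        refine Quotient.sound ⟨(ω' : ℂ)⁻¹ * ω, ?_, π, fun i => ?_⟩
        · rw [mul_pow, inv_pow, hUm, hUm]; simp
        · rw [mul_assoc, ← hπ i, inv_mul_cancel_left₀ (hU0 ω')]
      subst hab
      rw [(hpSet_smul (m+1) r _ a.out.2 _ (hUm ω)).2,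
        (hpSet_smul (m+1) r _ a.out.2 _ (hUm ω')).2] at h
      have := hp_free m r hr _ a.out.2 _ _ (inv_ne_zero (hU0 ω)) (inv_ne_zero (hU0 ω')) h
      rw [Prod.mk.injEq]
      exact ⟨rfl, Subtype.ext (inv_injective this)⟩
    have h1 := Nat.card_le_card_of_injective φ hφ
    rw [Nat.card_prod, Nat.card_eq_fintype_card (α := U), Nat.card_eq_fintype_card (α := T),
      Fintype.card_coe, Fintype.card_coe, hU, mul_comm] at h1
    exact Nat.le_of_mul_le_mul_left (h1.trans hTc) (by omega)

lemma hp_main (m : ℕ) (R : Multiset ℂ) (hRnd : R.Nodup) (S : Set (Fin (m+2) → ℂ))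
    (hS : S = {l | Function.Injective l ∧ (∀ i, l i ≠ 0) ∧ ∏ i, l i = 1 ∧
      ∃ κ : Fin (m+1) → ℂ, Function.Injective κ ∧
        Polynomial.derivative (hpP l) = Polynomial.C ((m+2 : ℕ) : ℂ) * hpP κ ∧
        (Finset.univ.val.map (fun j : Fin (m+1) => (hpP l).eval (κ j)) : Multiset ℂ) = R}) :
    S.Finite ∧ ∃ F : S → Fin ((m+2) ^ m), ∀ x y : S, F x = F y ↔ hpRel m x y := by
  classical
  rcases S.eq_empty_or_nonempty with hE | ⟨l0, hl0⟩
  · rw [hE]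
    exact ⟨Set.finite_empty, fun x => (x.2 : False).elim, fun x => (x.2 : False).elim⟩
  rw [hS] at hl0
  obtain ⟨-, -, -, κ0, -, -, hκ0⟩ := hl0
  set r : Fin (m+1) → ℂ := fun j => (hpP l0).eval (κ0 j) with hr
  have hrinj : Function.Injective r := by
    intro a b hab
    rw [← hκ0] at hRnd
    exact Multiset.inj_on_of_nodup_map hRnd a (Finset.mem_univ a) b (Finset.mem_univ b) hab
  have hSr : S = hpSet m r := by
    rw [hS]
    ext l
    constructor
    · rintro ⟨hl, -, hprod, κ, hκ, hder, hval⟩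
      have : ∀ k, ∃ j, (hpP l).eval (κ j) = r k := by
        intro k
        have hk : r k ∈ R := by
          rw [← hκ0]; exact Multiset.mem_map_of_mem r (Finset.mem_univ k)
        rw [← hval] at hk
        obtain ⟨j, -, hj⟩ := Multiset.mem_map.1 hk
        exact ⟨j, hj⟩
      choose σ hσ using this
      have hσi : Function.Injective σ := fun a b hab => hrinj (by rw [← hσ a, ← hσ b, hab])
      refine ⟨hl, hprod, fun k => κ (σ k), hκ.comp hσi, ?_, hσ⟩
      rw [hder, ← hpP_comp_perm κ (Equiv.ofBijective σ (Finite.injective_iff_bijective.1 hσi))]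
      push_cast
      rfl
    · rintro ⟨hl, hprod, u, hu, hder, hval⟩
      refine ⟨hl, fun i hi => ?_, hprod, u, hu, ?_, ?_⟩
      · rw [Finset.prod_eq_zero (Finset.mem_univ i) hi] at hprod
        exact zero_ne_one hprod
      · rw [hder]; push_cast; rfl
      · rw [← hκ0]; exact congrArg (fun f => Multiset.map f _) (funext hval)
  subst hSr
  clear hS
  refine ⟨hp_finite m r, ?_⟩
  have := (hp_finite m r).to_subtype
  have hc := hp_classes m r hrinj
  let e := Finite.equivFin (Quotient (hpSetoid m (hpSet m r)))
  refine ⟨fun x => Fin.castLE hc (e (Quotient.mk _ x)), fun x y => ?_⟩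
  rw [(Fin.castLE_injective hc).eq_iff, e.injective.eq_iff]
  exact Quotient.eq (r := hpSetoid m (hpSet m r))


/-- For a non-degenerate Henry–Parusiński value `R` (a multiset of
`n−1` pairwise distinct nonzero complex numbers), the set `S` of injective
tuples of nonzero complex numbers with product one whose associated polynomial
`Q_λ` has `n−1` distinct critical points and multiset of critical values `R`
is finite, and has at most `n^(n−2)` equivalence classes under permutation and
multiplication by `n`-th roots of unity. -/
theorem stmt_13 (n : ℕ) (hn : 2 ≤ n) (R : Multiset ℂ)
    (hRcard : Multiset.card R = n - 1) (hRnd : R.Nodup) (hR0 : (0 : ℂ) ∉ R)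
    (S : Set (Fin n → ℂ))
    (hS : S = {l | Function.Injective l ∧ (∀ i, l i ≠ 0) ∧ ∏ i, l i = 1 ∧
      ∃ κ : Fin (n - 1) → ℂ, Function.Injective κ ∧
        Polynomial.derivative (∏ j : Fin n, (Polynomial.X - Polynomial.C (l j))) =
          Polynomial.C (n : ℂ) *
            ∏ j : Fin (n - 1), (Polynomial.X - Polynomial.C (κ j)) ∧
        (Finset.univ.val.map (fun j : Fin (n - 1) =>
          (∏ i : Fin n, (Polynomial.X - Polynomial.C (l i))).eval (κ j)) :
            Multiset ℂ) = R}) :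
    S.Finite ∧ ∃ F : S → Fin (n ^ (n - 2)), ∀ x y : S,
      F x = F y ↔ ∃ ω : ℂ, ω ^ n = 1 ∧ ∃ π : Equiv.Perm (Fin n),
        ∀ i, (y : Fin n → ℂ) i = ω * (x : Fin n → ℂ) (π i) := by
  obtain ⟨m, rfl⟩ : ∃ m, n = m + 2 := ⟨n - 2, by omega⟩
  exact hp_main m R hRnd S hS
end

section
/- Let n ≥ 2 and let λ : [0,1] → ℂⁿ be a continuous family of tuples λ(t) = (λ₁(t),…,λₙ(t)) such that for every t ∈ [0,1] the entries of λ(t) are pairwise distinct and nonzero with λ₁(t)⋯λₙ(t) = 1, and such that the multiset of critical values of Q_{λ(t)}(s) = ∏_{j=1}^{n}(s−λ_j(t)) is independent of t and consists of n−1 pairwise distinct nonzero complex numbers. Then the family is trivial up to the action of permutations and n-th roots of unity: for every t ∈ [0,1] there exist ω ∈ ℂ with ωⁿ = 1 and a permutation π of {1,…,n} such that λ_i(t) = ω·λ_{π(i)}(0) for all i. (This is the algebraic form of: a continuous family of quasi-homogeneous, non-homogeneous, isolated-singularity function germs with constant Henry–Parusiński invariant is analytically trivial.) -/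
section CritHelpers

open Polynomial

noncomputable def pf (m : ℕ) (a : Fin m → ℂ) (z : ℂ) : ℂ := z^(m+1) + ∑ k : Fin m, a k * z^(k:ℕ)
noncomputable def pf1 (m : ℕ) (a : Fin m → ℂ) (z : ℂ) : ℂ :=
  ((m+1 : ℕ) : ℂ) * z^m + ∑ k : Fin m, a k * (((k:ℕ):ℂ) * z^((k:ℕ)-1))
noncomputable def pf2 (m : ℕ) (a : Fin m → ℂ) (z : ℂ) : ℂ :=
  ((m+1 : ℕ) : ℂ) * ((m:ℂ) * z^(m-1)) +
    ∑ k : Fin m, a k * (((k:ℕ):ℂ) * ((((k:ℕ)-1 : ℕ):ℂ) * z^((k:ℕ)-1-1)))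

lemma pf_line (m : ℕ) (a r : Fin m → ℂ) (z w : ℂ) :
    HasDerivAt (fun s : ℂ => pf m (a + s • r) (z + s * w))
      ((∑ k : Fin m, r k * z^(k:ℕ)) + pf1 m a z * w) 0 := by
  have hz : HasDerivAt (fun s : ℂ => z + s * w) w 0 := by
    simpa using ((hasDerivAt_id (0:ℂ)).mul_const w).const_add z
  have ha : ∀ k, HasDerivAt (fun s : ℂ => (a + s • r) k) (r k) 0 := fun k => by
    simpa using ((hasDerivAt_id (0:ℂ)).mul_const (r k)).const_add (a k)
  unfold pf
  have := (hz.pow (m+1)).add (HasDerivAt.fun_sum (u := Finset.univ)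
    (fun k _ => (ha k).mul (hz.pow (k:ℕ))))
  refine this.congr_deriv ?_
  simp [pf1, Finset.sum_add_distrib, add_mul, Finset.sum_mul]
  ring_nf

lemma pf1_line (m : ℕ) (a : Fin m → ℂ) (z w : ℂ) :
    HasDerivAt (fun s : ℂ => pf1 m a (z + s * w)) (pf2 m a z * w) 0 := by
  have hz : HasDerivAt (fun s : ℂ => z + s * w) w 0 := by
    simpa using ((hasDerivAt_id (0:ℂ)).mul_const w).const_add z
  unfold pf1
  have := ((hz.pow m).const_mul ((m+1 : ℕ) : ℂ)).add (HasDerivAt.fun_sum (u := Finset.univ)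
    (fun (k : Fin m) _ => ((hz.pow ((k:ℕ)-1)).const_mul ((k:ℕ):ℂ)).const_mul (a k)))
  refine this.congr_deriv ?_
  simp [pf2, add_mul, Finset.sum_mul]
  ring_nf

noncomputable def pG (m : ℕ) (x : (Fin m → ℂ) × (Fin m → ℂ)) : (Fin m → ℂ) × (Fin m → ℂ) :=
  (fun i => pf m x.1 (x.2 i), fun i => pf1 m x.1 (x.2 i))

lemma pG_contDiff (m : ℕ) : ContDiff ℂ 1 (pG m) := by
  unfold pG pf pf1
  fun_prop

lemma vander (m : ℕ) (r d : Fin m → ℂ) (hd : Function.Injective d)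
    (h : ∀ i, ∑ k : Fin m, r k * (d i)^(k:ℕ) = 0) : r = 0 := by
  have := Matrix.det_vandermonde_ne_zero_iff.2 hd
  refine Matrix.eq_zero_of_mulVec_eq_zero this ?_
  ext i
  simpa [Matrix.mulVec, dotProduct, Matrix.vandermonde, mul_comm] using h i

lemma pG_inj (m : ℕ) (a d : Fin m → ℂ) (hd : Function.Injective d)
    (h1 : ∀ i, pf1 m a (d i) = 0) (h2 : ∀ i, pf2 m a (d i) ≠ 0) :
    ∃ U ∈ nhds (a, d), Set.InjOn (pG m) U := by
  have hs : HasStrictFDerivAt (pG m) (fderiv ℂ (pG m) (a,d)) (a,d) :=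
    (pG_contDiff m).contDiffAt.hasStrictFDerivAt (by norm_num)
  have hker : ∀ x, fderiv ℂ (pG m) (a,d) x = 0 → x = 0 := by
    rintro ⟨r, δ⟩ hx
    have hl : HasDerivAt (fun s : ℂ => (a, d) + s • (r, δ)) (r, δ) 0 := by
      simpa using ((hasDerivAt_id (0:ℂ)).smul_const (r, δ)).const_add (a, d)
    have hc : HasDerivAt (fun s : ℂ => pG m ((a, d) + s • (r, δ))) 0 0 := by
      have := HasFDerivAt.comp_hasDerivAt_of_eq (0:ℂ) hs.hasFDerivAt hl (by simp)
      rw [hx] at this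
      exact this
    have hc1 : ∀ i, HasDerivAt (fun s : ℂ => pf m (a + s • r) (d i + s * δ i)) 0 0 := by
      intro i
      have := (hasDerivAt_pi.1 (hc.fst)) i
      simpa [pG] using this
    have hc2 : ∀ i, HasDerivAt (fun s : ℂ => pf1 m (a + s • r) (d i + s * δ i)) 0 0 := by
      intro i
      have := (hasDerivAt_pi.1 (hc.snd)) i
      simpa [pG] using this
    have hr : r = 0 := by
      apply vander m r d hd
      intro i
      have := (pf_line m a r (d i) (δ i)).unique (hc1 i)
      simpa [h1] using this
    subst hr
    have hδ : δ = 0 := by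
      ext i
      have h := hc2 i
      simp only [smul_zero, add_zero] at h
      have := (pf1_line m a (d i) (δ i)).unique h
      simpa [h2 i] using this
    rw [hδ]; rfl
  let e := (LinearEquiv.ofInjectiveEndo ((fderiv ℂ (pG m) (a,d)) :
    (Fin m → ℂ) × (Fin m → ℂ) →ₗ[ℂ] (Fin m → ℂ) × (Fin m → ℂ))
    ((injective_iff_map_eq_zero _).2 hker)).toContinuousLinearEquiv
  have he : (e : (Fin m → ℂ) × (Fin m → ℂ) →L[ℂ] (Fin m → ℂ) × (Fin m → ℂ)) =
    fderiv ℂ (pG m) (a,d) := ContinuousLinearMap.ext fun x => rfl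
  rw [← he] at hs
  exact ⟨_, (hs.toOpenPartialHomeomorph (pG m)).open_source.mem_nhds
    hs.mem_toOpenPartialHomeomorph_source, (hs.toOpenPartialHomeomorph (pG m)).injOn⟩

lemma core (m : ℕ) {I : Type*} [TopologicalSpace I] [PreconnectedSpace I]
    (a d : I → Fin m → ℂ) (ha : Continuous a) (hd : Continuous d) (v : Fin m → ℂ)
    (hinj : ∀ t, Function.Injective (d t))
    (h0 : ∀ t i, pf m (a t) (d t i) = v i)
    (h1 : ∀ t i, pf1 m (a t) (d t i) = 0) (h2 : ∀ t i, pf2 m (a t) (d t i) ≠ 0) (s t : I) :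
    a s = a t := by
  have hlc : IsLocallyConstant a := by
    rw [IsLocallyConstant.iff_eventually_eq]
    intro x
    obtain ⟨U, hU, hi⟩ := pG_inj m (a x) (d x) (hinj x) (h1 x) (h2 x)
    have hc : Continuous fun t => (a t, d t) := ha.prodMk hd
    filter_upwards [hc.continuousAt.preimage_mem_nhds hU] with y hy
    have := hi hy (mem_of_mem_nhds hU) (by simp [pG, h0, h1])
    exact congrArg Prod.fst this
  exact hlc.apply_eq_of_preconnectedSpace s t

lemma cont_graph {I : Type*} [TopologicalSpace I] (K : Set ℂ) (hK : IsCompact K)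
    (S : Set (ℂ × I)) (hS : IsClosed S) (g : I → ℂ) (hgK : ∀ t, g t ∈ K)
    (hg : ∀ t, (g t, t) ∈ S) (hu : ∀ t z, (z, t) ∈ S → z = g t) : Continuous g := by
  rw [continuous_iff_isClosed]
  intro F hF
  haveI : CompactSpace K := isCompact_iff_compactSpace.1 hK
  have h1 : IsClosed {x : K × I | ((x.1 : ℂ), x.2) ∈ S ∧ (x.1 : ℂ) ∈ F} := by
    apply IsClosed.inter
    · exact hS.preimage (by fun_prop : Continuous fun x : K × I => ((x.1 : ℂ), x.2))
    · exact hF.preimage (by fun_prop : Continuous fun x : K × I => (x.1 : ℂ))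
  have h2 := isClosedMap_snd_of_compactSpace _ h1
  convert h2 using 1
  ext t
  constructor
  · intro h
    exact ⟨(⟨g t, hgK t⟩, t), ⟨hg t, h⟩, rfl⟩
  · rintro ⟨⟨z, t'⟩, ⟨h3, h4⟩, rfl⟩
    have := hu _ _ h3
    simp only at this h4
    rw [this] at h4
    exact h4

lemma cont_coeff {I ι : Type*} [TopologicalSpace I] (p : I → ι → ℂ) (hp : Continuous p)
    (s : Finset ι) : ∀ k, Continuous fun t => (∏ j ∈ s, (X - C (p t j))).coeff k := by
  classical
  induction s using Finset.induction_on with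
  | empty => intro k; simpa using continuous_const
  | insert i s hi ih =>
    intro k
    simp only [Finset.prod_insert hi, coeff_mul, coeff_sub, coeff_C]
    refine continuous_finsetSum _ fun x _ => ?_
    refine Continuous.mul ?_ (ih _)
    split_ifs
    · fun_prop
    · fun_prop

noncomputable def pPol (m : ℕ) (a : Fin m → ℂ) : ℂ[X] :=
  X^(m+1) + ∑ k : Fin m, C (a k) * X^(k:ℕ)

lemma pPol_eval (m : ℕ) (a : Fin m → ℂ) (z : ℂ) : (pPol m a).eval z = pf m a z := by
  simp [pPol, pf, eval_finsetSum]

lemma pPol_eval1 (m : ℕ) (a : Fin m → ℂ) (z : ℂ) :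
    (derivative (pPol m a)).eval z = pf1 m a z := by
  simp [pPol, pf1, eval_finsetSum, derivative_X_pow]

lemma pPol_eval2 (m : ℕ) (a : Fin m → ℂ) (z : ℂ) :
    (derivative (derivative (pPol m a))).eval z = pf2 m a z := by
  have h : ((m:ℂ[X]) + 1) = C ((m:ℂ)+1) := by simp
  have h' : ∀ k : ℕ, (k:ℂ[X]) = C (k:ℂ) := by simp
  simp only [pPol, pf2, eval_finsetSum, derivative_X_pow, derivative_add, derivative_sum,
    derivative_C_mul]
  simp [eval_finsetSum, derivative_X_pow]

lemma prod_eq_pPol (m : ℕ) (p : Fin (m+1) → ℂ) (hp : ∑ j, p j = 0) :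
    ∏ j, (X - C (p j)) = pPol m (fun k => (∏ j, (X - C (p j))).coeff k) := by
  set P := ∏ j, (X - C (p j)) with hP
  have hm : P.Monic := monic_prod_X_sub_C _ _
  have hd : P.natDegree = m+1 := by
    rw [hP, natDegree_finsetProd_X_sub_C_eq_card]; simp
  have hc : P.coeff m = 0 := by
    have := prod_X_sub_C_coeff_card_pred (Finset.univ : Finset (Fin (m+1))) p (by simp)
    simpa [hp] using this
  conv_lhs => rw [P.as_sum_range_C_mul_X_pow, hd, Finset.sum_range_succ, Finset.sum_range_succ]
  have h1 : P.coeff (m+1) = 1 := by rw [← hd]; exact hm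
  rw [hc, h1, Finset.sum_range]
  simp [pPol, add_comm]

lemma crit_bound (m : ℕ) (p : Fin (m+1) → ℂ) (M : ℝ) (hM : ∀ j, ‖p j‖ ≤ M) (z : ℂ)
    (hz : (derivative (∏ j, (X - C (p j)))).eval z = 0)
    (h0 : derivative (∏ j, (X - C (p j))) ≠ 0) : z ∈ Metric.closedBall (0:ℂ) M := by
  have hd : 0 < (∏ j, (X - C (p j))).degree := by
    apply natDegree_pos_iff_degree_pos.1
    rw [natDegree_finsetProd_X_sub_C_eq_card]; simp
  have := rootSet_derivative_subset_convexHull_rootSet hd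
    (mem_rootSet.2 ⟨h0, by simpa using hz⟩)
  refine convexHull_min ?_ (convex_closedBall _ _) this
  intro w hw
  have := (mem_rootSet.1 hw).2
  simp [eval_prod, Finset.prod_eq_zero_iff, sub_eq_zero] at this
  obtain ⟨j, rfl⟩ := this
  simpa using hM j

lemma part2 (m : ℕ) {I : Type*} [TopologicalSpace I] [PreconnectedSpace I] [CompactSpace I]
    (p : I → Fin (m+1) → ℂ) (hp : Continuous p) (hs : ∀ t, ∑ j, p t j = 0)
    (v : Fin m → ℂ) (hv : Function.Injective v) (κ : I → Fin m → ℂ)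
    (hκ : ∀ t, derivative (∏ j, (X - C (p t j))) = C (((m+1:ℕ)):ℂ) * ∏ j, (X - C (κ t j)))
    (hκv : ∀ t i, (∏ j, (X - C (p t j))).eval (κ t i) = v i) (s t : I) :
    ∏ j, (X - C (p s j)) = ∏ j, (X - C (p t j)) := by
  set a : I → Fin m → ℂ := fun t k => (∏ j, (X - C (p t j))).coeff k with ha
  have hP : ∀ t, ∏ j, (X - C (p t j)) = pPol m (a t) := fun t => prod_eq_pPol m (p t) (hs t)
  have hac : Continuous a := continuous_pi fun k => cont_coeff p hp _ _
  have hinj : ∀ t, Function.Injective (κ t) := by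
    intro t i j hij
    apply hv
    rw [← hκv t i, ← hκv t j, hij]
  have hm0 : (((m+1:ℕ)):ℂ) ≠ 0 := by exact_mod_cast Nat.succ_ne_zero m
  have hD0 : ∀ t, derivative (∏ j, (X - C (p t j))) ≠ 0 := by
    intro t
    rw [hκ]
    exact mul_ne_zero (C_ne_zero.2 hm0) (monic_prod_X_sub_C _ _).ne_zero
  have hr : ∀ t i, (derivative (∏ j, (X - C (p t j)))).eval (κ t i) = 0 := by
    intro t i
    rw [hκ, eval_mul, eval_prod, Finset.prod_eq_zero (Finset.mem_univ i), mul_zero]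
    simp
  have hr' : ∀ t z, (derivative (∏ j, (X - C (p t j)))).eval z = 0 → ∃ i, z = κ t i := by
    intro t z h
    rw [hκ, eval_mul, eval_prod, eval_C, mul_eq_zero, or_iff_right hm0,
      Finset.prod_eq_zero_iff] at h
    obtain ⟨i, _, h⟩ := h
    exact ⟨i, by simpa [sub_eq_zero] using h⟩
  have hr2 : ∀ t i, (derivative (derivative (∏ j, (X - C (p t j))))).eval (κ t i) ≠ 0 := by
    intro t i
    have hsep := (separable_prod_X_sub_C_iff (f := κ t)).2 (hinj t)
    have := hsep.aeval_derivative_ne_zero (x := κ t i) (by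
      simp [eval_prod, Finset.prod_eq_zero_iff, sub_eq_zero])
    rw [hκ, derivative_C_mul, eval_mul, eval_C]
    exact mul_ne_zero hm0 (by simpa using this)
  obtain ⟨M, hM⟩ : ∃ M : ℝ, ∀ t, ‖p t‖ ≤ M := by
    obtain ⟨M, hM⟩ := (isCompact_range hp).isBounded.exists_norm_le
    exact ⟨M, fun t => hM _ ⟨t, rfl⟩⟩
  have hκc : Continuous κ := by
    refine continuous_pi fun i => ?_
    have hc0 : Continuous fun x : ℂ × I => pf m (a x.2) x.1 := by
      unfold pf; fun_prop
    have hc1 : Continuous fun x : ℂ × I => pf1 m (a x.2) x.1 := by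
      unfold pf1; fun_prop
    refine cont_graph (Metric.closedBall 0 M) (isCompact_closedBall _ _)
      {x | pf m (a x.2) x.1 = v i ∧ pf1 m (a x.2) x.1 = 0}
      ((isClosed_eq hc0 continuous_const).inter (isClosed_eq hc1 continuous_const)) _ ?_ ?_ ?_
    · intro t
      exact crit_bound m (p t) M (fun j => (norm_le_pi_norm _ j).trans (hM t)) _ (hr t i) (hD0 t)
    · intro t
      refine ⟨?_, ?_⟩
      · simp only; rw [← pPol_eval, ← hP, hκv]
      · simp only; rw [← pPol_eval1, ← hP, hr]
    · rintro t z ⟨h1, h2⟩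
      simp only at h1 h2
      rw [← pPol_eval1, ← hP] at h2
      obtain ⟨j, rfl⟩ := hr' t z h2
      rw [← pPol_eval, ← hP, hκv] at h1
      rw [hv h1]
  rw [hP, hP, core m a κ hac hκc v hinj ?_ ?_ ?_ s t]
  · intro t i; rw [← pPol_eval, ← hP, hκv]
  · intro t i; rw [← pPol_eval1, ← hP, hr]
  · intro t i; rw [← pPol_eval2, ← hP]; exact hr2 t i

lemma const_of_finite {I : Type*} [TopologicalSpace I] [PreconnectedSpace I] (g : I → ℂ)
    (hg : Continuous g) (T : Set ℂ) (hT : T.Finite) (h : ∀ t, g t ∈ T) (s t : I) : g s = g t := by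
  haveI : Finite T := hT
  have := PreconnectedSpace.constant (Y := T) ‹_› (f := fun t => (⟨g t, h t⟩ : T))
    (by fun_prop) (x := s) (y := t)
  exact congrArg Subtype.val this


lemma reorder (m : ℕ) (v w : Fin m → ℂ) (hv : Function.Injective v)
    (h : (Finset.univ.val.map w : Multiset ℂ) = Finset.univ.val.map v) :
    ∃ σ : Equiv.Perm (Fin m), ∀ i, w (σ i) = v i := by
  have h1 : ∀ i, ∃ j, w j = v i := by
    intro i
    have : v i ∈ (Finset.univ.val.map w : Multiset ℂ) := by
      rw [h]; exact Multiset.mem_map_of_mem _ (Finset.mem_univ i)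
    obtain ⟨j, _, hj⟩ := Multiset.mem_map.1 this
    exact ⟨j, hj⟩
  choose σ hσ using h1
  have hi : Function.Injective σ := by
    intro i j hij
    apply hv
    rw [← hσ i, ← hσ j, hij]
  exact ⟨Equiv.ofBijective σ (Finite.injective_iff_bijective.1 hi), hσ⟩

lemma shift_prod {k : ℕ} (q : Fin k → ℂ) (c : ℂ) :
    (∏ j, (X - C (q j))).comp (X + C c) = ∏ j, (X - C (q j - c)) := by
  rw [Polynomial.prod_comp]
  refine Finset.prod_congr rfl fun j _ => ?_
  simp; ring

lemma main_const (m : ℕ) {I : Type*} [TopologicalSpace I] [PreconnectedSpace I] [CompactSpace I]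
    (l : I → Fin (m+1) → ℂ) (hl : Continuous l) (hprod : ∀ t, ∏ i, l t i = 1)
    (R : Multiset ℂ) (hR : R.Nodup)
    (hcrit : ∀ t, ∃ κ : Fin m → ℂ,
      derivative (∏ j, (X - C (l t j))) = C ((m+1:ℕ):ℂ) * ∏ j, (X - C (κ j)) ∧
      (Finset.univ.val.map (fun j : Fin m => (∏ i, (X - C (l t i))).eval (κ j)) :
          Multiset ℂ) = R) (t0 t : I) : l t = l t0 := by
  choose κ hκ hκR using hcrit
  let v : Fin m → ℂ := fun j => (∏ i, (X - C (l t0 i))).eval (κ t0 j)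
  have hv : Function.Injective v := by
    have : (Finset.univ.val.map v : Multiset ℂ).Nodup := by
      have h := hκR t0
      change Finset.univ.val.map v = R at h
      rw [h]; exact hR
    intro i j hij
    exact Multiset.inj_on_of_nodup_map this i (Finset.mem_univ i) j (Finset.mem_univ j) hij
  have hσ : ∀ t, ∃ σ : Equiv.Perm (Fin m), ∀ i,
      (∏ i, (X - C (l t i))).eval (κ t (σ i)) = v i := fun t =>
    reorder m v _ hv ((hκR t).trans (hκR t0).symm)
  choose σ hσ using hσ
  have hm0 : (((m+1:ℕ)):ℂ) ≠ 0 := by exact_mod_cast Nat.succ_ne_zero m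
  let c : I → ℂ := fun t => (∑ j, l t j) / ((m+1:ℕ):ℂ)
  have hc : Continuous c := by fun_prop
  let p : I → Fin (m+1) → ℂ := fun t j => l t j - c t
  have hp : Continuous p := by fun_prop
  have hPQ : ∀ t, ∏ j, (X - C (p t j)) = (∏ j, (X - C (l t j))).comp (X + C (c t)) :=
    fun t => (shift_prod _ _).symm
  have key := part2 m p hp (by
      intro t
      simp only [p, c, Finset.sum_sub_distrib, Finset.sum_const, Finset.card_univ,
        Fintype.card_fin, nsmul_eq_mul]
      field_simp
      simp) v hv (fun t i => κ t (σ t i) - c t) (by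
      intro t
      rw [hPQ, derivative_comp, hκ, mul_comp, shift_prod,
        ← Equiv.prod_comp (σ t) (fun j => X - C (κ t j - c t))]
      simp) (by
      intro t i
      rw [hPQ, eval_comp]
      simpa using hσ t i)
  have hpc : ∀ t j, p t j = p t0 j := by
    intro t j
    refine const_of_finite (fun t => p t j) (by fun_prop) (Set.range (p t0)) (Set.finite_range _)
      ?_ t t0
    intro s
    have h1 : (∏ j, (X - C (p s j))).eval (p s j) = 0 := by
      rw [eval_prod]; exact Finset.prod_eq_zero (Finset.mem_univ j) (by simp)
    rw [key s t0, eval_prod, Finset.prod_eq_zero_iff] at h1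
    obtain ⟨i, _, h⟩ := h1
    exact ⟨i, (sub_eq_zero.1 (by simpa using h)).symm⟩
  let W : ℂ[X] := ∏ j, (X - C (- p t0 j)) - C 1
  have hW : W ≠ 0 := by
    intro h
    have h1 : ∏ j, (X - C (- p t0 j)) = C 1 := sub_eq_zero.1 h
    have h2 := congrArg natDegree h1
    rw [natDegree_finsetProd_X_sub_C_eq_card, natDegree_C] at h2
    simp at h2
  have hcc : c t = c t0 := by
    refine const_of_finite c hc {z | W.IsRoot z} (finite_setOfPred_isRoot hW) ?_ t t0
    intro s
    have : ∏ j, (c s + p t0 j) = 1 := by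
      rw [← hprod s]
      refine Finset.prod_congr rfl fun j _ => ?_
      rw [← hpc s j]; simp [p]
    simp [W, IsRoot, eval_prod, this]
  ext j
  have := hpc t j
  simp only [p, hcc] at this
  exact sub_left_injective this

end CritHelpers


/-- A continuous family `t ∈ [0,1] ↦ λ(t)` of injective tuples of
nonzero complex numbers with product one, whose polynomials `Q_{λ(t)}` have a
constant multiset of critical values consisting of `n−1` pairwise distinct
nonzero numbers, is trivial up to permutations and `n`-th roots of unity. -/
theorem stmt_14 (n : ℕ) (hn : 2 ≤ n) (l : ℝ → Fin n → ℂ)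
    (hcont : ContinuousOn l (Set.Icc 0 1))
    (hinj : ∀ t ∈ Set.Icc (0 : ℝ) 1, Function.Injective (l t))
    (hne : ∀ t ∈ Set.Icc (0 : ℝ) 1, ∀ i, l t i ≠ 0)
    (hprod : ∀ t ∈ Set.Icc (0 : ℝ) 1, ∏ i, l t i = 1)
    (R : Multiset ℂ) (hRcard : Multiset.card R = n - 1)
    (hRnd : R.Nodup) (hR0 : (0 : ℂ) ∉ R)
    (hcrit : ∀ t ∈ Set.Icc (0 : ℝ) 1, ∃ κ : Fin (n - 1) → ℂ,
      Polynomial.derivative (∏ j : Fin n, (Polynomial.X - Polynomial.C (l t j))) =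
        Polynomial.C (n : ℂ) *
          ∏ j : Fin (n - 1), (Polynomial.X - Polynomial.C (κ j)) ∧
      (Finset.univ.val.map (fun j : Fin (n - 1) =>
        (∏ i : Fin n, (Polynomial.X - Polynomial.C (l t i))).eval (κ j)) :
          Multiset ℂ) = R) :
    ∀ t ∈ Set.Icc (0 : ℝ) 1, ∃ ω : ℂ, ω ^ n = 1 ∧ ∃ π : Equiv.Perm (Fin n),
      ∀ i, l t i = ω * l 0 (π i) := by
  obtain ⟨m, rfl⟩ : ∃ m, n = m + 1 := ⟨n - 1, by omega⟩
  intro t ht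
  refine ⟨1, one_pow _, Equiv.refl _, fun i => ?_⟩
  have : PreconnectedSpace (Set.Icc (0:ℝ) 1) := Subtype.preconnectedSpace isPreconnected_Icc
  have := main_const m (I := Set.Icc (0:ℝ) 1) (fun t => l t)
    (continuousOn_iff_continuous_domRestrict.1 hcont) (fun t => hprod t t.2) R hRnd
    (fun t => hcrit t t.2) ⟨0, by simp⟩ ⟨t, ht⟩
  simpa using congrFun this i
end
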